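/- arXiv:2507.16435 — 3 statements merged into one kernel-verified Lean document; each statement's English description precedes it below -/
import Mathlib

section
/- Let k be a differential field of characteristic zero whose field of constants C is algebraically closed, let E be a Picard–Vessiot extension of k for a monic linear differential operator L over k, and let d be a positive integer. Let V be the set of all solutions y ∈ E of L(y) = 0 such that k⟨y⟩ is a d-solvable extension of k. Then V is a C-subspace of E, and σ(V) = V for every automorphism σ of the field E that fixes k pointwise and commutes with the derivation. -/
universe u

/-- A bundled differential field of characteristic zero: a field together with a derivation,
given as a raw function satisfying additivity and the Leibniz rule. -/
structure DFld : Type (u + 1) where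
  carrier : Type u
  [fieldInst : Field carrier]
  [charZeroInst : CharZero carrier]
  deriv : carrier → carrier
  deriv_add : ∀ a b, deriv (a + b) = deriv a + deriv b
  deriv_mul : ∀ a b, deriv (a * b) = deriv a * b + a * deriv b

attribute [instance] DFld.fieldInst DFld.charZeroInst

/-- The result of applying the monic linear differential operator
`∂^n + a_{n-1} ∂^{n-1} + ⋯ + a_1 ∂ + a_0` (with coefficients `a`) to `y`,
where the derivation is given by `D`. -/
def LApply {E : Type u} [Field E] (D : E → E) (n : ℕ) (a : Fin n → E) (y : E) : E :=
  D^[n] y + ∑ i : Fin n, a i * D^[(i : ℕ)] y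

/-- `diffGen D k S` is the smallest differential subfield (w.r.t. the derivation `D`)
containing the subfield `k` and the set `S`; i.e. the differential field `k⟨S⟩`. -/
def diffGen {E : Type u} [Field E] (D : E → E) (k : Subfield E) (S : Set E) : Subfield E :=
  sInf {F : Subfield E | k ≤ F ∧ S ⊆ ↑F ∧ ∀ x ∈ F, D x ∈ F}

/-- The subfield of constants of a differential subfield `k`: `{x ∈ k | D x = 0}`. -/
def constantsOf {E : Type u} [Field E] (D : Derivation ℤ E E) (k : Subfield E) : Subfield E where
  carrier := {x | x ∈ k ∧ D x = 0}
  zero_mem' := ⟨k.zero_mem, map_zero D⟩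
  one_mem' := ⟨k.one_mem, D.map_one_eq_zero⟩
  add_mem' := by
    rintro a b ⟨hak, ha0⟩ ⟨hbk, hb0⟩
    exact ⟨k.add_mem hak hbk, by rw [map_add, ha0, hb0, add_zero]⟩
  neg_mem' := by
    rintro a ⟨hak, ha0⟩
    exact ⟨k.neg_mem hak, by rw [map_neg, ha0, neg_zero]⟩
  mul_mem' := by
    rintro a b ⟨hak, ha0⟩ ⟨hbk, hb0⟩
    exact ⟨k.mul_mem hak hbk, by
      rw [Derivation.leibniz, ha0, hb0, smul_zero, smul_zero, add_zero]⟩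
  inv_mem' := by
    rintro x ⟨hxk, hx0⟩
    refine ⟨k.inv_mem hxk, ?_⟩
    by_cases h : x = 0
    · simp [h]
    · have h1 : D (x * x⁻¹) = 0 := by rw [mul_inv_cancel₀ h, D.map_one_eq_zero]
      rw [Derivation.leibniz, hx0, smul_zero, add_zero, smul_eq_mul] at h1
      exact (mul_eq_zero.mp h1).resolve_left h

/-- `F` is a Picard–Vessiot extension of `k` (inside a common differential field) for the
monic linear differential operator of order `n` with (lower-order) coefficients `a`:
both are differential subfields, the constants of `F` equal the constants of `k`,
the coefficients lie in `k`, and `F` is differentially generated over `k` by an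
`n`-dimensional vector space (over the constants) of solutions. -/
def IsPVWith {E : Type u} [Field E] (D : E → E) (k F : Subfield E) (n : ℕ)
    (a : Fin n → E) : Prop :=
  k ≤ F ∧ (∀ x ∈ k, D x ∈ k) ∧ (∀ x ∈ F, D x ∈ F) ∧
  (∀ x ∈ F, D x = 0 → x ∈ k) ∧
  (∀ i, a i ∈ k) ∧
  ∃ y : Fin n → E,
    (∀ i, y i ∈ F) ∧
    (∀ i, LApply D n a (y i) = 0) ∧
    (∀ c : Fin n → E, (∀ i, c i ∈ k ∧ D (c i) = 0) → (∑ i, c i * y i) = 0 → ∀ i, c i = 0) ∧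
    diffGen D k (Set.range y) = F

/-- `F` is a Picard–Vessiot extension of `k` for some monic linear differential operator. -/
def IsPV {E : Type u} [Field E] (D : E → E) (k F : Subfield E) : Prop :=
  ∃ (n : ℕ) (a : Fin n → E), IsPVWith D k F n a

/-- Relative version: the differential subfield `F` is a Picard–Vessiot extension
of the differential subfield `kb ≤ F`. -/
def IsPVRel {E : Type u} [Field E] (D : E → E) (kb F : Subfield E)
    (hF : ∀ x ∈ F, D x ∈ F) : Prop :=
  IsPV (fun x : ↥F => (⟨D ↑x, hF ↑x x.2⟩ : ↥F)) (Subfield.comap F.subtype kb) ⊤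

/-- The ambient differential field (with derivation `D`) is a strongly normal extension of
its differential subfield `k`: it is finitely generated as a field extension of `k`, has no
new constants, and every differential embedding over `k` into a differential field extension
`M` lands in the compositum of the image of the base copy with the constants of `M`. -/
def IsSN {E : Type u} [Field E] (D : E → E) (k : Subfield E) : Prop :=
  (∀ x ∈ k, D x ∈ k) ∧
  (∃ s : Finset E, Subfield.closure (↑k ∪ ↑s) = (⊤ : Subfield E)) ∧
  (∀ x : E, D x = 0 → x ∈ k) ∧
  ∀ (M : DFld.{u}) (ι σ : E →+* M.carrier),
    (∀ x, ι (D x) = M.deriv (ι x)) →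
    (∀ x, σ (D x) = M.deriv (σ x)) →
    (∀ x ∈ k, σ x = ι x) →
    ∀ e : E, σ e ∈ Subfield.closure (Set.range ι ∪ {m : M.carrier | M.deriv m = 0})

/-- Relative version: the differential subfield `F` is a strongly normal extension of the
differential subfield `kb ≤ F`. -/
def IsSNRel {E : Type u} [Field E] (D : E → E) (kb F : Subfield E)
    (hF : ∀ x ∈ F, D x ∈ F) : Prop :=
  IsSN (fun x : ↥F => (⟨D ↑x, hF ↑x x.2⟩ : ↥F)) (Subfield.comap F.subtype kb)

/-- `K` is a finite field extension of the subfield `M`. -/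
def FinExt {E : Type u} [Field E] (M K : Subfield E) : Prop :=
  ∃ h : M ≤ K,
    letI : Algebra ↥M ↥K := (Subfield.inclusion h).toAlgebra
    Module.Finite ↥M ↥K

/-- The transcendence degree of the subfield `K` over the subfield `k`, as the supremum of the
cardinalities of subsets of `K` that are algebraically independent over `k`. -/
noncomputable def trdegOf {E : Type u} [Field E] (k K : Subfield E) : Cardinal.{u} :=
  ⨆ s : {s : Set E // s ⊆ (K : Set E) ∧ AlgebraicIndependent ↥k (fun x : ↥s => (x : E))},
    Cardinal.mk ↥(s.1)

/-- `K` and `M` are free over `k`: every finite subset of `K` that is algebraically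
independent over `k` remains algebraically independent over `M`. -/
def FreeOver {E : Type u} [Field E] (k K M : Subfield E) : Prop :=
  ∀ s : Finset E, (↑s : Set E) ⊆ (K : Set E) →
    AlgebraicIndependent ↥k (fun x : ↥(↑s : Set E) => (x : E)) →
    AlgebraicIndependent ↥M (fun x : ↥(↑s : Set E) => (x : E))

/-- `K` is a `k`-irreducible differential field: it is a finitely generated differential field
extension of `k` of transcendence degree at least 1, and every intermediate differential field
`k ⊂ M ⊆ K` has transcendence degree `0` or `trdeg(K|k)` over `k`. -/
def IsIrred {E : Type u} [Field E] (D : E → E) (k K : Subfield E) : Prop :=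
  (∃ s : Finset E, diffGen D k ↑s = K) ∧
  1 ≤ trdegOf k K ∧
  ∀ M : Subfield E, (∀ x ∈ M, D x ∈ M) → k < M → M ≤ K →
    trdegOf k M = 0 ∨ trdegOf k M = trdegOf k K

/-- `Kf` is a `d`-solvable extension of `k`: there is a tower of differential fields starting
at (a copy of) `k`, each step being a finite algebraic extension or a Picard–Vessiot extension
for an operator of order at most `d`, whose top contains (the copy of) `Kf`. -/
def IsDSolvable {E : Type u} [Field E] (D : E → E) (k Kf : Subfield E) (d : ℕ) : Prop :=
  ∃ (Ω : DFld.{u}) (j : E →+* Ω.carrier),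
    (∀ x, j (D x) = Ω.deriv (j x)) ∧
    ∃ (r : ℕ) (T : Fin (r + 1) → Subfield Ω.carrier),
      T 0 = Subfield.map j k ∧
      Subfield.map j Kf ≤ T (Fin.last r) ∧
      (∀ i, ∀ x ∈ T i, Ω.deriv x ∈ T i) ∧
      ∀ i : Fin r,
        FinExt (T i.castSucc) (T i.succ) ∨
        ∃ n ≤ d, ∃ a : Fin n → Ω.carrier, IsPVWith Ω.deriv (T i.castSucc) (T i.succ) n a

/-- `Kn` is generated over `kb`, as a differential field with the same constants, by one
solution `z` of an inhomogeneous equation `L(y) = b` (with `L` monic over `kb` of order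
`n ≤ d` and `b ∈ kb`) together with an `n`-dimensional space (over the constants) of
solutions of `L(y) = 0`. -/
def IsPVInhomLe {E : Type u} [Field E] (D : E → E) (kb Kn : Subfield E) (d : ℕ) : Prop :=
  kb ≤ Kn ∧ (∀ x ∈ kb, D x ∈ kb) ∧ (∀ x ∈ Kn, D x ∈ Kn) ∧
  (∀ x ∈ Kn, D x = 0 → x ∈ kb) ∧
  ∃ n, n ≤ d ∧ ∃ (a : Fin n → E) (b z : E) (y : Fin n → E),
    (∀ i, a i ∈ kb) ∧ b ∈ kb ∧ z ∈ Kn ∧ (∀ i, y i ∈ Kn) ∧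
    LApply D n a z = b ∧
    (∀ i, LApply D n a (y i) = 0) ∧
    (∀ c : Fin n → E, (∀ i, c i ∈ kb ∧ D (c i) = 0) → (∑ i, c i * y i) = 0 → ∀ i, c i = 0) ∧
    diffGen D kb (insert z (Set.range y)) = Kn

/-- `Kf` is a `d⁺`-solvable extension of `k`. -/
def IsDPlusSolvable {E : Type u} [Field E] (D : E → E) (k Kf : Subfield E) (d : ℕ) : Prop :=
  ∃ (Ω : DFld.{u}) (j : E →+* Ω.carrier),
    (∀ x, j (D x) = Ω.deriv (j x)) ∧
    ∃ (r : ℕ) (T : Fin (r + 1) → Subfield Ω.carrier),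
      T 0 = Subfield.map j k ∧
      Subfield.map j Kf ≤ T (Fin.last r) ∧
      (∀ i, ∀ x ∈ T i, Ω.deriv x ∈ T i) ∧
      ∀ i : Fin r,
        FinExt (T i.castSucc) (T i.succ) ∨ IsPVInhomLe Ω.deriv (T i.castSucc) (T i.succ) d

/-- `TSet D kb K` is the set of elements of `K` annihilated by some monic linear differential
operator with coefficients in `kb`. -/
def TSet {E : Type u} [Field E] (D : E → E) (kb K : Subfield E) : Set E :=
  {x | x ∈ K ∧ ∃ (n : ℕ) (a : Fin n → E), (∀ i, a i ∈ kb) ∧ LApply D n a x = 0}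



namespace PVA
open Polynomial

/-- differential ideal -/
def DId {R : Type*} [CommRing R] (D : Derivation ℤ R R) (I : Ideal R) : Prop :=
  ∀ x ∈ I, D x ∈ I

/-- differentially simple ring -/
def DSimple {R : Type*} [CommRing R] (D : Derivation ℤ R R) : Prop :=
  Nontrivial R ∧ ∀ I : Ideal R, DId D I → I = ⊥ ∨ I = ⊤

/-- constants are algebraically closed (elementary form) -/
def ACc {K : Type*} [Field K] (D : Derivation ℤ K K) : Prop :=
  ∀ p : K[X], p.Monic → 0 < p.natDegree → (∀ i, D (p.coeff i) = 0) →
    ∃ c, D c = 0 ∧ p.eval c = 0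

lemma exists_max_DId {R : Type*} [CommRing R] (D : Derivation ℤ R R) (I : Ideal R)
    (hI : DId D I) (hI1 : I ≠ ⊤) :
    ∃ m : Ideal R, I ≤ m ∧ DId D m ∧ m ≠ ⊤ ∧ ∀ J, DId D J → m ≤ J → J = m ∨ J = ⊤ := by
  obtain ⟨m, hIm, hm⟩ := zorn_le_nonempty₀ {J : Ideal R | DId D J ∧ J ≠ ⊤} (by
    intro c hc hchain y hy
    refine ⟨sSup c, ⟨?_, ?_⟩, fun z hz => le_sSup hz⟩
    · intro x hx
      rw [Submodule.mem_sSup_of_directed ⟨y, hy⟩ hchain.directedOn] at hx ⊢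
      obtain ⟨J, hJ, hxJ⟩ := hx
      exact ⟨J, hJ, (hc hJ).1 x hxJ⟩
    · intro h
      have h1 : (1 : R) ∈ sSup c := by rw [h]; trivial
      rw [Submodule.mem_sSup_of_directed ⟨y, hy⟩ hchain.directedOn] at h1
      obtain ⟨J, hJ, hxJ⟩ := h1
      exact (hc hJ).2 ((Ideal.eq_top_iff_one _).2 hxJ)) I ⟨hI, hI1⟩
  refine ⟨m, hIm, hm.prop.1, hm.prop.2, fun J hJ hmJ => ?_⟩
  by_cases h : J = ⊤
  · exact Or.inr h
  · exact Or.inl (le_antisymm (hm.le_of_ge ⟨hJ, h⟩ hmJ) hmJ)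

lemma exists_simple_quot {R : Type u} [CommRing R] (D : Derivation ℤ R R) (I : Ideal R)
    (hI : DId D I) (hI1 : I ≠ ⊤) :
    ∃ (m : Ideal R) (D' : Derivation ℤ (R ⧸ m) (R ⧸ m)), I ≤ m ∧
      (∀ x, D' (Ideal.Quotient.mk m x) = Ideal.Quotient.mk m (D x)) ∧ DSimple D' := by
  obtain ⟨m, hIm, hD, h1, hmax⟩ := exists_max_DId D I hI hI1
  have hd : ∀ x, (Ideal.Quotient.mkₐ ℤ m) x = 0 → (Ideal.Quotient.mkₐ ℤ m) (D x) = 0 := by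
    intro x hx
    simp only [Ideal.Quotient.mkₐ_eq_mk, Ideal.Quotient.eq_zero_iff_mem] at hx ⊢
    exact hD x hx
  refine ⟨m, Derivation.liftOfSurjective (f := Ideal.Quotient.mkₐ ℤ m)
    (Ideal.Quotient.mkₐ_surjective ℤ m) hd, hIm, ?_, ?_, ?_⟩
  · intro x
    exact Derivation.liftOfSurjective_apply (f := Ideal.Quotient.mkₐ ℤ m)
      (Ideal.Quotient.mkₐ_surjective ℤ m) hd x
  · exact Ideal.Quotient.nontrivial_iff.2 h1
  · intro J hJ
    have key : DId D (J.comap (Ideal.Quotient.mk m)) := by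
      intro x hx
      have := hJ _ hx
      erw [Derivation.liftOfSurjective_apply (f := Ideal.Quotient.mkₐ ℤ m)
        (Ideal.Quotient.mkₐ_surjective ℤ m) hd x] at this
      exact this
    have hle : m ≤ J.comap (Ideal.Quotient.mk m) := by
      intro x hx
      rw [Ideal.mem_comap, Ideal.Quotient.eq_zero_iff_mem.2 hx]
      exact J.zero_mem
    rcases hmax _ key hle with h | h
    · left
      rw [eq_bot_iff]
      intro x hx
      obtain ⟨x, rfl⟩ := Ideal.Quotient.mk_surjective x
      have : x ∈ m := by rw [← h]; exact hx
      exact Ideal.Quotient.eq_zero_iff_mem.2 this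
    · right
      rw [Ideal.eq_top_iff_one] at h ⊢
      simpa using h

lemma DSimple.isDomain {R : Type*} [CommRing R] {D : Derivation ℤ R R} (h : DSimple D)
    (hQ : ∀ n : ℕ, n ≠ 0 → IsUnit (n : R)) : IsDomain R := by
  haveI := h.1
  have nz : ∀ a : R, ¬ IsNilpotent a → ∀ b, a * b = 0 → b = 0 := by
    intro a ha b hb
    let I : Ideal R :=
      { carrier := {b | ∃ n : ℕ, a ^ n * b = 0}
        add_mem' := by
          rintro x y ⟨n, hn⟩ ⟨m, hm⟩
          refine ⟨n + m, ?_⟩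
          have : a ^ (n + m) * (x + y) = a ^ m * (a ^ n * x) + a ^ n * (a ^ m * y) := by ring
          rw [this, hn, hm]; simp
        zero_mem' := ⟨0, by simp⟩
        smul_mem' := by
          rintro c x ⟨n, hn⟩
          refine ⟨n, ?_⟩
          have : a ^ n * (c • x) = c * (a ^ n * x) := by simp; ring
          rw [this, hn, mul_zero] }
    have hI : DId D I := by
      rintro x ⟨n, hn⟩
      refine ⟨n + 1, ?_⟩
      have h1 : D (a ^ n * x) = 0 := by rw [hn, map_zero]
      rw [Derivation.leibniz, Derivation.leibniz_pow] at h1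
      have h2 : a * (a ^ n * D x + x * (n * (a ^ (n - 1) * D a))) = 0 := by
        have : a ^ n * D x + x * (n * (a ^ (n - 1) * D a)) = 0 := by simpa using h1
        rw [this, mul_zero]
      rcases n with _ | n
      · have hx : x = 0 := by simpa using hn
        simp [hx]
      · have h3 : a * (x * (((n + 1 : ℕ) : R) * (a ^ n * D a))) =
            (((n + 1 : ℕ) : R)) * D a * (a ^ (n + 1) * x) := by ring
        simp only [Nat.add_sub_cancel] at h2
        rw [mul_add, h3, hn, mul_zero, add_zero] at h2
        rw [pow_succ, mul_comm (a ^ (n+1)) a, mul_assoc]; exact h2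
    rcases h.2 I hI with h0 | h0
    · have : b ∈ I := ⟨1, by simpa using hb⟩
      rw [h0] at this; exact this
    · exfalso
      have : (1 : R) ∈ I := by rw [h0]; trivial
      obtain ⟨n, hn⟩ := this
      exact ha ⟨n, by simpa using hn⟩
  have hnil : DId D (nilradical R) := by
    intro a ha
    rw [mem_nilradical] at ha ⊢
    by_contra hc
    by_cases ha0 : a = 0
    · exact hc (by simp [ha0])
    have hmin := pow_nilpotencyClass ha
    have hpos := pos_nilpotencyClass_iff.2 ha
    obtain ⟨n, hn⟩ := Nat.exists_eq_succ_of_ne_zero hpos.ne'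
    have hpred := pow_pred_nilpotencyClass ha
    rw [hn] at hmin hpred
    simp only [Nat.succ_sub_one, Nat.succ_eq_add_one] at hmin hpred
    have h1 : D (a ^ (n + 1)) = 0 := by rw [hmin, map_zero]
    rw [Derivation.leibniz_pow] at h1
    have h2 : ((n + 1 : ℕ) : R) * (D a * a ^ n) = 0 := by
      have : ((n + 1 : ℕ) : R) * (a ^ n * D a) = 0 := by simpa using h1
      rw [← this]; ring
    have h3 := (hQ (n + 1) (by omega)).mul_right_eq_zero.1 h2
    exact hpred (nz _ hc _ h3)
  have hnil0 : nilradical R = ⊥ := by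
    rcases h.2 _ hnil with h0 | h0
    · exact h0
    · exfalso
      have : (1 : R) ∈ nilradical R := by rw [h0]; trivial
      rw [mem_nilradical] at this
      exact not_isNilpotent_one this
  have : NoZeroDivisors R := by
    constructor
    intro a b hab
    by_cases ha : IsNilpotent a
    · left
      have : a ∈ nilradical R := ha
      rw [hnil0] at this; exact this
    · right; exact nz a ha b hab
  exact NoZeroDivisors.to_isDomain R

lemma DSimple.const_unit {R : Type*} [CommRing R] {D : Derivation ℤ R R} (h : DSimple D)
    {c : R} (hc : D c = 0) (hc0 : c ≠ 0) : IsUnit c := by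
  rcases h.2 (Ideal.span {c}) (by
    intro x hx
    rw [Ideal.mem_span_singleton'] at hx ⊢
    obtain ⟨y, rfl⟩ := hx
    exact ⟨D y, by simp [hc, mul_comm]⟩) with h0 | h0
  · rw [Ideal.span_singleton_eq_bot] at h0; exact absurd h0 hc0
  · rwa [Ideal.span_singleton_eq_top] at h0

lemma DSimple.injective {R S : Type*} [CommRing R] [CommRing S] [Nontrivial S]
    {D : Derivation ℤ R R}
    (h : DSimple D) {D' : Derivation ℤ S S} (f : R →+* S) (hf : ∀ x, f (D x) = D' (f x)) :
    Function.Injective f := by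
  rw [RingHom.injective_iff_ker_eq_bot]
  rcases h.2 (RingHom.ker f) (by
    intro x hx
    rw [RingHom.mem_ker] at hx ⊢
    rw [hf, hx, map_zero]) with h0 | h0
  · exact h0
  · exfalso
    have : (1 : R) ∈ RingHom.ker f := by rw [h0]; trivial
    simp [RingHom.mem_ker] at this

lemma alg_const {K B : Type*} [Field K] [CommRing B] [IsDomain B] [Algebra K B]
    {DK : Derivation ℤ K K} {DB : Derivation ℤ B B}
    (hcomp : ∀ x, DB (algebraMap K B x) = algebraMap K B (DK x)) (hC : ACc DK)
    {b : B} (hb : DB b = 0) (hi : IsIntegral K b) : ∃ c, DK c = 0 ∧ algebraMap K B c = b := by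
  set p := minpoly K b with hp
  have hm : p.Monic := minpoly.monic hi
  let q : K[X] := ∑ i ∈ Finset.range p.natDegree, monomial i (DK (p.coeff i))
  have hq : aeval b q = 0 := by
    have h1 : DB (aeval b p) = 0 := by rw [hp, minpoly.aeval, map_zero]
    rw [aeval_eq_sum_range, Finset.sum_range_succ, map_add, map_sum] at h1
    have h2 : ∀ i, DB (p.coeff i • b ^ i) = aeval b (monomial i (DK (p.coeff i))) := by
      intro i
      rw [Algebra.smul_def, Derivation.leibniz, Derivation.leibniz_pow, hb, hcomp]
      simp [aeval_monomial, mul_comm]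
    simp only [h2] at h1
    rw [coeff_natDegree, hm.leadingCoeff, Derivation.map_one_eq_zero] at h1
    simpa [q, map_sum] using h1
  have hq0 : q = 0 := by
    by_contra h
    have h1 := natDegree_le_natDegree (minpoly.degree_le_of_ne_zero K b h hq)
    have hpos : 0 < p.natDegree := minpoly.natDegree_pos hi
    have h2 : q.natDegree ≤ p.natDegree - 1 := by
      apply natDegree_sum_le_of_forall_le
      intro i hi
      have := Finset.mem_range.1 hi
      exact (natDegree_monomial_le _).trans (by omega)
    rw [← hp] at h1
    omega
  have hco : ∀ i, DK (p.coeff i) = 0 := by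
    intro i
    rcases lt_trichotomy i p.natDegree with h | h | h
    · have h1 : q.coeff i = 0 := by rw [hq0]; simp
      simp only [q, finsetSum_coeff, coeff_monomial] at h1
      rw [Finset.sum_ite_eq' (Finset.range p.natDegree) i] at h1
      simpa [h] using h1
    · rw [h, coeff_natDegree, hm.leadingCoeff, Derivation.map_one_eq_zero]
    · rw [coeff_eq_zero_of_natDegree_lt h, map_zero]
  obtain ⟨c, hc, hr⟩ := hC p hm (minpoly.natDegree_pos hi) hco
  refine ⟨c, hc, ?_⟩
  exact minpoly.root hi hr

lemma trans_const {K B : Type*} [Field K] [CommRing B] [IsDomain B] [Algebra K B]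
    [Algebra.FiniteType K B] {b : B} (hb : ¬ IsIntegral K b) (S : Set K) (hS : S.Infinite) :
    ∃ s ∈ S, ¬ IsUnit (b - algebraMap K B s) := by
  letI : Algebra K[X] B := (aeval b : K[X] →ₐ[K] B).toAlgebra
  haveI : IsScalarTower K K[X] B := IsScalarTower.of_algebraMap_eq (fun x => by
    change _ = aeval b (algebraMap K K[X] x); simp)
  have hinj : Function.Injective (algebraMap K[X] B) := by
    change Function.Injective (aeval b : K[X] →ₐ[K] B)
    rw [← transcendental_iff_injective]
    intro h; exact hb h.isIntegral
  haveI : FaithfulSMul K[X] B := (faithfulSMul_iff_algebraMap_injective _ _).2 hinj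
  haveI : Algebra.FiniteType K[X] B := Algebra.FiniteType.of_restrictScalars_finiteType K K[X] B
  haveI : Algebra.FinitePresentation K[X] B := Algebra.FinitePresentation.of_finiteType.1 inferInstance
  haveI : Module.IsTorsionFree K[X] B := inferInstance
  haveI : Module.Flat K[X] B := inferInstance
  have hop := (PrimeSpectrum.isOpenMap_comap_of_hasGoingDown_of_finitePresentation
    (R := K[X]) (S := B)).isOpen_range
  have hmem : (⟨⊥, Ideal.isPrime_bot⟩ : PrimeSpectrum K[X]) ∈
      Set.range (PrimeSpectrum.comap (algebraMap K[X] B)) := by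
    refine ⟨⟨⊥, Ideal.isPrime_bot⟩, ?_⟩
    ext1
    simp only [PrimeSpectrum.comap_asIdeal]
    exact Ideal.comap_bot_of_injective _ hinj
  obtain ⟨_, ⟨_, ⟨f, rfl⟩, rfl⟩, hf, hsub⟩ :=
    PrimeSpectrum.isBasis_basic_opens.exists_subset_of_mem_open hmem hop
  have hf0 : f ≠ 0 := by
    intro h; apply hf; simp [h]
  obtain ⟨s, hs, hroot⟩ : ∃ s ∈ S, ¬ f.IsRoot s := by
    by_contra! h
    exact hS ((finite_setOf_isRoot hf0).subset h)
  refine ⟨s, hs, fun hu => ?_⟩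
  have hprime : (Ideal.span {(X - C s : K[X])}).IsPrime :=
    (Ideal.span_singleton_prime (X_sub_C_ne_zero s)).2 (prime_X_sub_C s)
  obtain ⟨Q, hQ⟩ := hsub (show (⟨_, hprime⟩ : PrimeSpectrum K[X]) ∈ _ from by
    change f ∉ Ideal.span {(X - C s : K[X])}
    rw [Ideal.mem_span_singleton, dvd_iff_isRoot]
    exact hroot)
  have h1 : (X - C s : K[X]) ∈ (PrimeSpectrum.comap (algebraMap K[X] B) Q).asIdeal := by
    rw [hQ]; exact Ideal.mem_span_singleton_self _
  have h2 : b - algebraMap K B s ∈ Q.asIdeal := by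
    have : algebraMap K[X] B (X - C s) ∈ Q.asIdeal := h1
    have e : algebraMap K[X] B (X - C s) = b - algebraMap K B s := by
      change aeval b (X - C s) = _
      simp
    rwa [e] at this
  exact Q.isPrime.ne_top (Ideal.eq_top_of_isUnit_mem _ h2 hu)

lemma ACc.infinite {K : Type*} [Field K] [CharZero K] (D : Derivation ℤ K K) :
    {c : K | D c = 0}.Infinite := by
  refine Set.infinite_of_injective_forall_mem (f := fun n : ℕ => (n : K)) Nat.cast_injective ?_
  intro n; simp

lemma simple_const {K B : Type*} [Field K] [CharZero K] [CommRing B] [Algebra K B]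
    [Algebra.FiniteType K B]
    {DK : Derivation ℤ K K} {DB : Derivation ℤ B B}
    (hcomp : ∀ x, DB (algebraMap K B x) = algebraMap K B (DK x)) (hC : ACc DK)
    (hs : DSimple DB) {b : B} (hb : DB b = 0) : ∃ c, DK c = 0 ∧ algebraMap K B c = b := by
  haveI := hs.1
  haveI : IsDomain B := hs.isDomain (by
    intro n hn
    have : IsUnit (algebraMap K B (n : K)) := (IsUnit.mk0 (n : K) (by exact_mod_cast hn)).map _
    simpa using this)
  by_cases hi : IsIntegral K b
  · exact alg_const hcomp hC hb hi
  · obtain ⟨s, hs1, hs2⟩ := trans_const hi _ (ACc.infinite DK)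
    exfalso
    apply hs2
    apply hs.const_unit
    · rw [map_sub, hb, hcomp, hs1]; simp
    · intro h
      apply hi
      rw [sub_eq_zero.1 h]
      exact isIntegral_algebraMap
end PVA


namespace PVA
open Polynomial TensorProduct


/-- derivations over the integers -/
abbrev DerZ (R : Type*) [CommRing R] := Derivation ℤ R R

/-- derivation from additive map -/
noncomputable def mkD {R : Type*} [CommRing R] (f : R →+ R)
    (h : ∀ a b, f (a * b) = f a * b + a * f b) : Derivation ℤ R R :=
  Derivation.mk' f.toIntLinearMap (by
    intro a b
    simp only [AddMonoidHom.coe_toIntLinearMap, smul_eq_mul]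
    rw [h]; ring)

@[simp] lemma mkD_apply {R : Type*} [CommRing R] (f : R →+ R)
    (h : ∀ a b, f (a * b) = f a * b + a * f b) (x : R) : mkD f h x = f x := rfl

lemma exists_tensorD {M A B : Type*} [CommRing M] [CommRing A] [CommRing B] [Algebra M A]
    [Algebra M B] (DM : Derivation ℤ M M) (DA : Derivation ℤ A A) (DB : Derivation ℤ B B)
    (hA : ∀ x, DA (algebraMap M A x) = algebraMap M A (DM x))
    (hB : ∀ x, DB (algebraMap M B x) = algebraMap M B (DM x)) :
    ∃ D : DerZ (A ⊗[M] B),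
      ∀ a b, D (a ⊗ₜ b) = DA a ⊗ₜ b + a ⊗ₜ DB b := by
  let f : A →+ B →+ A ⊗[M] B :=
    AddMonoidHom.mk' (fun a => AddMonoidHom.mk' (fun b => DA a ⊗ₜ b + a ⊗ₜ DB b) (by
      intro x y; simp only [map_add, tmul_add]; abel)) (by
      intro x y; ext b; simp only [map_add, add_tmul, AddMonoidHom.mk'_apply,
        AddMonoidHom.add_apply]; abel)
  let g : A ⊗[M] B →+ A ⊗[M] B := TensorProduct.liftAddHom f (by
    intro r a b
    simp only [f, AddMonoidHom.mk'_apply]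
    rw [Algebra.smul_def r a, Algebra.smul_def r b, Derivation.leibniz, Derivation.leibniz, hA, hB]
    simp only [smul_eq_mul, ← Algebra.smul_def, mul_comm a, mul_comm b, add_tmul, tmul_add,
      smul_tmul, tmul_smul]
    abel)
  have hg : ∀ a b, g (a ⊗ₜ b) = DA a ⊗ₜ b + a ⊗ₜ DB b := fun a b => rfl
  refine ⟨mkD g ?_, hg⟩
  intro x y
  induction x using TensorProduct.induction_on with
  | zero => simp
  | add x1 x2 h1 h2 => rw [add_mul, map_add, h1, h2, map_add]; ring
  | tmul a b =>
    induction y using TensorProduct.induction_on with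
    | zero => simp
    | add x1 x2 h1 h2 => rw [mul_add, map_add, h1, h2, map_add]; ring
    | tmul c d =>
      simp only [Algebra.TensorProduct.tmul_mul_tmul, hg, Derivation.leibniz, smul_eq_mul,
        add_mul, mul_add, add_tmul, tmul_add, mul_comm c, mul_comm d]
      abel

lemma exists_fracD {B F : Type*} [CommRing B] [IsDomain B] [Field F] [Algebra B F]
    [IsFractionRing B F] (DB : Derivation ℤ B B) :
    ∃ D : Derivation ℤ F F, ∀ b, D (algebraMap B F b) = algebraMap B F (DB b) := by
  let φ : B →+* DualNumber F :=
    { toFun := fun b => TrivSqZeroExt.inl (algebraMap B F b) +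
        TrivSqZeroExt.inr (algebraMap B F (DB b))
      map_one' := by simp
      map_zero' := by simp
      map_add' := by
        intro x y
        ext <;> simp only [TrivSqZeroExt.fst_add, TrivSqZeroExt.snd_add, TrivSqZeroExt.fst_inl,
          TrivSqZeroExt.snd_inl, TrivSqZeroExt.fst_inr, TrivSqZeroExt.snd_inr, map_add] <;> ring
      map_mul' := by
        intro x y
        ext <;> simp only [TrivSqZeroExt.fst_add, TrivSqZeroExt.snd_add, TrivSqZeroExt.fst_inl,
          TrivSqZeroExt.snd_inl, TrivSqZeroExt.fst_inr, TrivSqZeroExt.snd_inr, map_add,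
          TrivSqZeroExt.fst_mul, TrivSqZeroExt.snd_mul, map_mul, Derivation.leibniz, smul_eq_mul,
          MulOpposite.smul_eq_mul_unop, MulOpposite.unop_op] <;> ring }
  have hsnd : ∀ b, (φ b).snd = algebraMap B F (DB b) := by
    intro b
    change TrivSqZeroExt.snd (TrivSqZeroExt.inl (algebraMap B F b) +
        TrivSqZeroExt.inr (algebraMap B F (DB b))) = _
    rw [TrivSqZeroExt.snd_add, TrivSqZeroExt.snd_inl, TrivSqZeroExt.snd_inr, zero_add]
  have hu : ∀ y : nonZeroDivisors B, IsUnit (φ y) := by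
    intro y
    rw [TrivSqZeroExt.isUnit_iff_isUnit_fst]
    have : (algebraMap B F y) ≠ 0 := by
      simpa using nonZeroDivisors.coe_ne_zero y
    simpa [φ] using this
  let ψ : F →+* DualNumber F := IsLocalization.lift hu
  have hψ : ∀ b, ψ (algebraMap B F b) = φ b := fun b => IsLocalization.lift_eq hu b
  have hfst : ∀ x, (ψ x).fst = x := by
    have : (TrivSqZeroExt.fstHom F F F).toRingHom.comp ψ = RingHom.id F := by
      apply IsLocalization.ringHom_ext (nonZeroDivisors B)
      ext b
      simp [hψ, φ]
    intro x
    exact RingHom.congr_fun this x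
  refine ⟨mkD (AddMonoidHom.mk' (fun x => (ψ x).snd) (by intro a b; simp)) ?_, ?_⟩
  · intro a b
    simp only [AddMonoidHom.mk'_apply, map_mul, TrivSqZeroExt.snd_mul, hfst, smul_eq_mul,
      MulOpposite.smul_eq_mul_unop, MulOpposite.unop_op]
    ring
  · intro b
    simp only [mkD_apply, AddMonoidHom.mk'_apply, hψ, hsnd]

/-- bundle a field with derivation -/
def toDFld {F : Type u} [Field F] [CharZero F] (D : Derivation ℤ F F) : DFld.{u} where
  carrier := F
  deriv := D
  deriv_add := map_add D
  deriv_mul := by intro a b; rw [Derivation.leibniz]; simp; ring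

/-- derivation of a bundled field -/
noncomputable def _root_.DFld.D (A : DFld.{u}) : Derivation ℤ A.carrier A.carrier :=
  mkD (AddMonoidHom.mk' A.deriv A.deriv_add) A.deriv_mul

lemma D_apply (A : DFld.{u}) (x : A.carrier) : A.D x = A.deriv x := rfl

lemma frac_const {K B F : Type u} [Field K] [CharZero K] [CommRing B] [Algebra K B]
    [IsDomain B] [Field F] [Algebra B F] [IsFractionRing B F]
    [Algebra.FiniteType K B]
    {DK : Derivation ℤ K K} {DB : Derivation ℤ B B} {D : Derivation ℤ F F}
    (hD : ∀ b, D (algebraMap B F b) = algebraMap B F (DB b))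
    (hcomp : ∀ x, DB (algebraMap K B x) = algebraMap K B (DK x)) (hC : ACc DK)
    (hs : DSimple DB) :
    ∀ x : F, D x = 0 → ∃ c, DK c = 0 ∧ algebraMap B F (algebraMap K B c) = x := by
  intro x hx
  let I : Ideal B :=
    { carrier := {h | ∃ b, algebraMap B F b = algebraMap B F h * x}
      add_mem' := by
        rintro a b ⟨c, hc⟩ ⟨d, hd⟩
        exact ⟨c + d, by rw [map_add, map_add, hc, hd]; ring⟩
      zero_mem' := ⟨0, by simp⟩
      smul_mem' := by
        rintro a b ⟨c, hc⟩
        exact ⟨a * c, by rw [smul_eq_mul, map_mul, map_mul, hc]; ring⟩ }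
  have hI : DId DB I := by
    rintro a ⟨c, hc⟩
    refine ⟨DB c, ?_⟩
    rw [← hD, hc, Derivation.leibniz, hx, hD]
    simp [mul_comm]
  have hI0 : I ≠ ⊥ := by
    obtain ⟨a, b, hb, hab⟩ := IsFractionRing.div_surjective (A := B) x
    intro h
    have : b ∈ I := ⟨a, by
      rw [← hab]
      have : algebraMap B F b ≠ 0 := by
        simpa using nonZeroDivisors.ne_zero hb
      field_simp⟩
    rw [h] at this
    exact nonZeroDivisors.ne_zero hb this
  have h1 : (1 : B) ∈ I := by
    rw [(hs.2 I hI).resolve_left hI0]; trivial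
  obtain ⟨b, hb⟩ := h1
  rw [map_one, one_mul] at hb
  have hDb : DB b = 0 := by
    apply IsFractionRing.injective B F
    rw [← hD, hb, hx, map_zero]
  obtain ⟨c, hc, hc'⟩ := simple_const hcomp hC hs hDb
  exact ⟨c, hc, by rw [hc', hb]⟩

lemma simple_field {K B : Type u} [Field K] [CharZero K] [CommRing B] [Algebra K B]
    [Algebra.FiniteType K B]
    {DK : Derivation ℤ K K} {DB : Derivation ℤ B B}
    (hcomp : ∀ x, DB (algebraMap K B x) = algebraMap K B (DK x)) (hC : ACc DK)
    (hs : DSimple DB) :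
    ∃ (F : DFld.{u}) (f : B →+* F.carrier), (∀ x, f (DB x) = F.deriv (f x)) ∧
      Function.Injective f ∧
      ∀ x, F.deriv x = 0 → ∃ c, DK c = 0 ∧ f (algebraMap K B c) = x := by
  haveI := hs.1
  haveI : IsDomain B := hs.isDomain (by
    intro n hn
    have : IsUnit (algebraMap K B (n : K)) := (IsUnit.mk0 (n : K) (by exact_mod_cast hn)).map _
    simpa using this)
  obtain ⟨D, hD⟩ := exists_fracD (F := FractionRing B) DB
  haveI : CharZero B := charZero_of_injective_algebraMap (algebraMap K B).injective
  haveI : CharZero (FractionRing B) :=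
    charZero_of_injective_algebraMap (IsFractionRing.injective B (FractionRing B))
  refine ⟨toDFld D, algebraMap B (FractionRing B), fun x => (hD x).symm,
    IsFractionRing.injective B (FractionRing B), ?_⟩
  exact frac_const (F := FractionRing B) hD hcomp hC hs

/-- tensor product of a differential field and a simple algebra has a simple quotient -/
lemma tensor_simple {M Ω P : Type u} [Field M] [Field Ω] [CommRing P]
    [Algebra M Ω] [Algebra M P] [Algebra.FiniteType M P]
    {DM : Derivation ℤ M M} {DΩ : Derivation ℤ Ω Ω} {DP : Derivation ℤ P P}
    (hΩ : ∀ x, DΩ (algebraMap M Ω x) = algebraMap M Ω (DM x))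
    (hP : ∀ x, DP (algebraMap M P x) = algebraMap M P (DM x))
    (hs : Nontrivial P) :
    ∃ (B : Type u) (_ : CommRing B) (_ : Algebra Ω B) (_ : Algebra.FiniteType Ω B)
      (DB : Derivation ℤ B B) (β : P →+* B),
      DSimple DB ∧ (∀ x, DB (algebraMap Ω B x) = algebraMap Ω B (DΩ x)) ∧
      (∀ x, DB (β x) = β (DP x)) ∧
      (∀ m, β (algebraMap M P m) = algebraMap Ω B (algebraMap M Ω m)) ∧
      (Algebra.adjoin Ω (Set.range β) = ⊤) := by
  obtain ⟨D, hD⟩ := exists_tensorD DM DΩ DP hΩ hP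
  have hinj : Function.Injective (Algebra.TensorProduct.includeRight : P →ₐ[M] Ω ⊗[M] P) :=
    Algebra.TensorProduct.includeRight_injective (algebraMap M Ω).injective
  haveI : Nontrivial (Ω ⊗[M] P) := hinj.nontrivial
  obtain ⟨m, D', -, hD', hsim⟩ := exists_simple_quot D ⊥ (by
    intro x hx
    rw [Ideal.mem_bot] at hx
    rw [hx, map_zero]; exact Ideal.zero_mem _) bot_ne_top
  refine ⟨(Ω ⊗[M] P) ⧸ m, inferInstance, inferInstance, inferInstance, D',
    (Ideal.Quotient.mk m).comp (Algebra.TensorProduct.includeRight : P →ₐ[M] Ω ⊗[M] P).toRingHom,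
    hsim, ?_, ?_, ?_, ?_⟩
  · intro x
    change D' (Ideal.Quotient.mk m (x ⊗ₜ 1)) = Ideal.Quotient.mk m (DΩ x ⊗ₜ 1)
    rw [hD', hD]; simp
  · intro x
    change D' (Ideal.Quotient.mk m (1 ⊗ₜ x)) = Ideal.Quotient.mk m (1 ⊗ₜ DP x)
    rw [hD', hD]; simp
  · intro x
    change Ideal.Quotient.mk m (1 ⊗ₜ _) = Ideal.Quotient.mk m (_ ⊗ₜ 1)
    apply congrArg
    exact (Algebra.TensorProduct.includeRight : P →ₐ[M] Ω ⊗[M] P).commutes x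
  · rw [eq_top_iff]
    rintro x -
    obtain ⟨x, rfl⟩ := Ideal.Quotient.mk_surjective x
    induction x using TensorProduct.induction_on with
    | zero => rw [map_zero]; exact Subalgebra.zero_mem _
    | add a b ha hb => rw [map_add]; exact Subalgebra.add_mem _ ha hb
    | tmul a b =>
      have : Ideal.Quotient.mk m (a ⊗ₜ[M] b) = a • Ideal.Quotient.mk m (1 ⊗ₜ[M] b) := by
        have e : a ⊗ₜ[M] b = a • ((1 : Ω) ⊗ₜ[M] b) := by rw [smul_tmul']; simp
        rw [e]; rfl
      rw [this]
      exact Subalgebra.smul_mem _ (Algebra.subset_adjoin (Set.mem_range.2 ⟨b, rfl⟩)) a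

lemma amalg_ring {M Ω P : Type u} [Field M] [Field Ω] [CharZero Ω] [CommRing P]
    [Algebra M Ω] [Algebra M P] [Algebra.FiniteType M P]
    {DM : Derivation ℤ M M} {DΩ : Derivation ℤ Ω Ω} {DP : Derivation ℤ P P}
    (hΩ : ∀ x, DΩ (algebraMap M Ω x) = algebraMap M Ω (DM x))
    (hP : ∀ x, DP (algebraMap M P x) = algebraMap M P (DM x))
    (hs : DSimple DP) (hC : ACc DΩ) :
    ∃ (F : DFld.{u}) (α : Ω →+* F.carrier) (β : P →+* F.carrier),
      (∀ x, α (DΩ x) = F.deriv (α x)) ∧ (∀ x, β (DP x) = F.deriv (β x)) ∧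
      (∀ m, α (algebraMap M Ω m) = β (algebraMap M P m)) ∧
      Function.Injective β ∧
      ∀ x, F.deriv x = 0 → ∃ c, DΩ c = 0 ∧ α c = x := by
  obtain ⟨B, _, _, _, DB, β, hsB, h1, h2, h3, -⟩ := tensor_simple hΩ hP hs.1
  obtain ⟨F, f, hf, hfi, hc⟩ := simple_field h1 hC hsB
  haveI := hsB.1
  refine ⟨F, f.comp (algebraMap Ω B), f.comp β, ?_, ?_, ?_, ?_, ?_⟩
  · intro x; simp [← h1, hf]
  · intro x; simp [← h2, hf]
  · intro m; simp [h3]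
  · exact hfi.comp (hs.injective β (fun x => (h2 x).symm))
  · simpa using hc
end PVA


namespace PVA
open Polynomial TensorProduct


lemma ACc.transport {A B : Type*} [Field A] [Field B] {DA : Derivation ℤ A A}
    {DB : Derivation ℤ B B} (f : A →+* B) (hf : ∀ x, f (DA x) = DB (f x))
    (hc : ∀ x, DB x = 0 → ∃ c, f c = x) (h : ACc DA) : ACc DB := by
  intro p hm hd hp
  have hl : p ∈ lifts f := by
    rw [lifts_iff_coeff_lifts]
    intro i
    obtain ⟨c, hc⟩ := hc _ (hp i)
    exact ⟨c, hc⟩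
  obtain ⟨q, hq, hqd, hqm⟩ := lifts_and_natDegree_eq_and_monic hl hm
  obtain ⟨c, hc1, hc2⟩ := h q hqm (by omega) (by
    intro i
    apply f.injective
    rw [hf, map_zero, ← hp i, ← hq, coeff_map])
  refine ⟨f c, by rw [← hf, hc1, map_zero], ?_⟩
  rw [← hq, eval_map, eval₂_hom, hc2, map_zero]

lemma wronskian {L : Type*} [Field L] {D : Derivation ℤ L L} {n : ℕ}
    (W A : Matrix (Fin n) (Fin n) L) (hW : ∀ j i, D (W j i) = (A * W) j i)
    (hdet : W.det = 0) : ∃ c : Fin n → L, c ≠ 0 ∧ (∀ i, D (c i) = 0) ∧ W.mulVec c = 0 := by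
  classical
  have hex : ∃ m : ℕ, ∃ v : Fin n → L, v ≠ 0 ∧ W.mulVec v = 0 ∧
      (Finset.univ.filter (fun i => v i ≠ 0)).card = m := by
    obtain ⟨v, hv, hv'⟩ := Matrix.exists_mulVec_eq_zero_iff.2 hdet
    exact ⟨_, v, hv, hv', rfl⟩
  obtain ⟨v, hv0, hv, hcard⟩ := Nat.find_spec hex
  have hmin := fun m => Nat.find_min hex (m := m)
  obtain ⟨i0, hi0⟩ := Function.ne_iff.1 hv0
  simp only [Pi.zero_apply] at hi0
  let w : Fin n → L := (v i0)⁻¹ • v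
  have hw : W.mulVec w = 0 := by simp only [w, Matrix.mulVec_smul, hv, smul_zero]
  have hwi : w i0 = 1 := by simp [w, hi0]
  have hDw : W.mulVec (fun i => D (w i)) = 0 := by
    ext j
    have h1 : D (W.mulVec w j) = 0 := by rw [hw]; simp
    have h2 : ((A * W).mulVec w) j = 0 := by
      rw [← Matrix.mulVec_mulVec, hw]; simp
    simp only [Matrix.mulVec, dotProduct, map_sum, Derivation.leibniz, hW, smul_eq_mul,
      Finset.sum_add_distrib] at h1 h2 ⊢
    rw [Pi.zero_apply, ← h1]
    rw [left_eq_add, ← h2]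
    exact Finset.sum_congr rfl (fun i _ => mul_comm _ _)
  refine ⟨w, ?_, ?_, hw⟩
  · intro h; rw [h] at hwi; simp at hwi
  · by_contra! hne
    obtain ⟨i1, hi1⟩ := hne
    refine hmin (Finset.univ.filter (fun i => D (w i) ≠ 0)).card ?_
      ⟨fun i => D (w i), Function.ne_iff.2 ⟨i1, hi1⟩, hDw, rfl⟩
    rw [← hcard]
    apply Finset.card_lt_card
    rw [Finset.ssubset_iff_of_subset]
    · refine ⟨i0, by simpa using hi0, ?_⟩
      simp [hwi]
    · intro i hi
      simp only [Finset.mem_filter, Finset.mem_univ, true_and] at hi ⊢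
      intro h
      apply hi
      simp [w, h]

lemma companion {L : Type*} [Field L] {D : Derivation ℤ L L} (M : Subfield L) {n : ℕ}
    (a : Fin n → L) (ha : ∀ i, a i ∈ M) :
    ∃ A : Matrix (Fin n) (Fin n) L, (∀ j l, A j l ∈ M) ∧
      ∀ y, LApply D n a y = 0 → ∀ j : Fin n, D (D^[(j : ℕ)] y) =
        ∑ l : Fin n, A j l * D^[(l : ℕ)] y := by
  refine ⟨fun j l => if (j : ℕ) + 1 < n then (if (l : ℕ) = j + 1 then 1 else 0) else - a l, ?_, ?_⟩
  · intro j l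
    dsimp only
    split_ifs
    · exact M.one_mem
    · exact M.zero_mem
    · exact M.neg_mem (ha l)
  · intro y hy j
    rw [← Function.iterate_succ_apply' (⇑D) j y]
    by_cases h : (j : ℕ) + 1 < n
    · simp only [h, if_true]
      rw [Finset.sum_eq_single (⟨j + 1, h⟩ : Fin n)]
      · simp
      · intro b _ hb
        have : (b : ℕ) ≠ j + 1 := fun h' => hb (Fin.ext h')
        simp [this]
      · simp
    · simp only [h, if_false]
      have hj : (j : ℕ).succ = n := by have := j.2; omega
      rw [hj]
      unfold LApply at hy
      rw [eq_neg_of_add_eq_zero_left hy, ← Finset.sum_neg_distrib]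
      exact Finset.sum_congr rfl (fun i _ => by ring)

lemma adjoin_closed {M L : Type*} [Field M] [Field L] [Algebra M L] {DM : Derivation ℤ M M}
    {DL : Derivation ℤ L L} (hcomp : ∀ x, DL (algebraMap M L x) = algebraMap M L (DM x))
    (S : Set L) (Q : Subalgebra M L) (hle : Algebra.adjoin M S ≤ Q)
    (hS : ∀ s ∈ S, DL s ∈ Q) : ∀ x ∈ Algebra.adjoin M S, DL x ∈ Q := by
  intro x hx
  induction hx using Algebra.adjoin_induction with
  | mem x hx => exact hS x hx
  | algebraMap r => rw [hcomp]; exact Q.algebraMap_mem _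
  | add x y _ _ h1 h2 => rw [map_add]; exact Q.add_mem h1 h2
  | mul x y hx hy h1 h2 =>
    rw [Derivation.leibniz]
    exact Q.add_mem (Q.mul_mem (hle hx) h2) (Q.mul_mem (hle hy) h1)

/-- generators of the PV ring -/
def pvGens {L : Type*} [Field L] {n : ℕ} (W : Matrix (Fin n) (Fin n) L) : Set L :=
  Set.range (fun p : Fin n × Fin n => W p.1 p.2) ∪ {W.det⁻¹}

lemma pvGens_finite {L : Type*} [Field L] {n : ℕ} (W : Matrix (Fin n) (Fin n) L) :
    (pvGens W).Finite := (Set.finite_range _).union (Set.finite_singleton _)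

lemma pv_closed {M L : Type*} [Field M] [Field L] [Algebra M L] {DM : Derivation ℤ M M}
    {DL : Derivation ℤ L L} (hcomp : ∀ x, DL (algebraMap M L x) = algebraMap M L (DM x))
    {n : ℕ} (W : Matrix (Fin n) (Fin n) L) (A : Matrix (Fin n) (Fin n) M)
    (hW : ∀ j i, DL (W j i) = (A.map (algebraMap M L) * W) j i) (hdet : W.det ≠ 0) :
    ∀ x ∈ Algebra.adjoin M (pvGens W), DL x ∈ Algebra.adjoin M (pvGens W) := by
  set S := Set.range (fun p : Fin n × Fin n => W p.1 p.2) with hSdef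
  have hSW : ∀ j i, W j i ∈ Algebra.adjoin M S := fun j i => Algebra.subset_adjoin ⟨(j, i), rfl⟩
  have hDW : ∀ j i, DL (W j i) ∈ Algebra.adjoin M S := by
    intro j i
    rw [hW, Matrix.mul_apply]
    refine Subalgebra.sum_mem _ fun l _ => Subalgebra.mul_mem _ ?_ (hSW _ _)
    exact Subalgebra.algebraMap_mem _ _
  have hQ : ∀ x ∈ Algebra.adjoin M S, DL x ∈ Algebra.adjoin M S := by
    apply adjoin_closed hcomp S _ le_rfl
    rintro _ ⟨p, rfl⟩
    exact hDW _ _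
  have hle : Algebra.adjoin M S ≤ Algebra.adjoin M (pvGens W) :=
    Algebra.adjoin_mono Set.subset_union_left
  have hd : W.det ∈ Algebra.adjoin M S := by
    rw [Matrix.det_apply]
    refine Subalgebra.sum_mem _ fun σ _ => ?_
    rw [Units.smul_def]
    exact Subalgebra.zsmul_mem _ (Subalgebra.prod_mem _ fun i _ => hSW _ _) _
  have hinv : W.det⁻¹ ∈ Algebra.adjoin M (pvGens W) :=
    Algebra.subset_adjoin (Or.inr rfl)
  apply adjoin_closed hcomp _ _ le_rfl
  rintro s (hs | hs)
  · obtain ⟨p, rfl⟩ := hs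
    exact hle (hDW _ _)
  · rw [Set.mem_singleton_iff] at hs
    rw [hs]
    have h1 : DL (W.det * W.det⁻¹) = 0 := by rw [mul_inv_cancel₀ hdet, Derivation.map_one_eq_zero]
    rw [Derivation.leibniz, smul_eq_mul, smul_eq_mul] at h1
    have h2 : DL W.det⁻¹ = - (W.det⁻¹ * W.det⁻¹ * DL W.det) := by
      field_simp
      field_simp at h1
      linear_combination h1
    rw [h2]
    exact Subalgebra.neg_mem _ (Subalgebra.mul_mem _ (Subalgebra.mul_mem _ hinv hinv)
      (hle (hQ _ hd)))

lemma range_le {M P B : Type*} [Field M] [CommRing P] [CommRing B] [Algebra M P] [Algebra M B]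
    {n : ℕ} (W : Matrix (Fin n) (Fin n) P) (d : P) (hd : d * W.det = 1)
    (htop : Algebra.adjoin M (Set.range (fun p : Fin n × Fin n => W p.1 p.2) ∪ {d}) = ⊤)
    (f g : P →ₐ[M] B) (c : Matrix (Fin n) (Fin n) M) (hc : c.det ≠ 0)
    (h : W.map g = W.map f * c.map (algebraMap M B)) : ∀ x, ∃ y, f y = g x := by
  suffices hle : g.range ≤ f.range by
    intro x
    exact hle ⟨x, rfl⟩
  rw [← Algebra.map_top, ← htop, AlgHom.map_adjoin, Algebra.adjoin_le_iff]
  rintro _ ⟨s, (⟨p, rfl⟩ | hs), rfl⟩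
  · have : g (W p.1 p.2) = (W.map f * c.map (algebraMap M B)) p.1 p.2 := by rw [← h]; rfl
    rw [SetLike.mem_coe, this, Matrix.mul_apply]
    refine Subalgebra.sum_mem _ fun l _ => Subalgebra.mul_mem _ ⟨_, rfl⟩ ?_
    exact Subalgebra.algebraMap_mem _ _
  · rw [Set.mem_singleton_iff] at hs
    subst hs
    have hg : g W.det = f W.det * algebraMap M B c.det := by
      have := congrArg Matrix.det h
      rw [Matrix.det_mul] at this
      rw [← AlgHom.coe_toRingHom, ← AlgHom.coe_toRingHom, RingHom.map_det, RingHom.map_det,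
        RingHom.map_det]
      exact this
    have e1 : g s * g W.det = 1 := by rw [← map_mul, hd, map_one]
    have e2 : f s * f W.det = 1 := by rw [← map_mul, hd, map_one]
    have e3 : algebraMap M B c.det * algebraMap M B c.det⁻¹ = 1 := by
      rw [← map_mul, mul_inv_cancel₀ hc, map_one]
    have : g s = f s * algebraMap M B c.det⁻¹ := by
      rw [hg] at e1
      calc g s = g s * ((f s * f W.det) * (algebraMap M B c.det * algebraMap M B c.det⁻¹)) := by
            rw [e2, e3]; ring
        _ = (g s * (f W.det * algebraMap M B c.det)) * (f s * algebraMap M B c.det⁻¹) := by ring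
        _ = _ := by rw [e1, one_mul]
    rw [SetLike.mem_coe, this]
    exact Subalgebra.mul_mem _ ⟨_, rfl⟩ (Subalgebra.algebraMap_mem _ _)

lemma matrix_const {B : Type*} [CommRing B] {DB : Derivation ℤ B B} {n : ℕ}
    (A Y1 Y2 Z V : Matrix (Fin n) (Fin n) B) (h1 : ∀ j i, DB (Y1 j i) = (A * Y1) j i)
    (h2 : ∀ j i, DB (Y2 j i) = (A * Y2) j i) (hV : V * Y1 = 1) (hZ : Y2 = Y1 * Z) :
    ∀ j i, DB (Z j i) = 0 := by
  let DZ : Matrix (Fin n) (Fin n) B := fun j i => DB (Z j i)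
  have key : Y1 * DZ = 0 := by
    ext j i
    have e1 := h2 j i
    have e2 : (A * Y2) j i = ((A * Y1) * Z) j i := by rw [hZ, Matrix.mul_assoc]
    rw [e2] at e1
    rw [hZ, Matrix.mul_apply, map_sum] at e1
    rw [Matrix.mul_apply] at e1
    simp only [Derivation.leibniz, smul_eq_mul, Finset.sum_add_distrib, h1] at e1
    rw [Matrix.mul_apply, Matrix.zero_apply]
    have e3 : ∑ x, Z x i * (A * Y1) j x = ∑ x, (A * Y1) j x * Z x i :=
      Finset.sum_congr rfl (fun _ _ => mul_comm _ _)
    rw [e3] at e1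
    simpa using e1
  have : DZ = 0 := by
    rw [← one_mul DZ, ← hV, Matrix.mul_assoc, key, Matrix.mul_zero]
  intro j i
  exact congrFun (congrFun this j) i

end PVA


namespace PVA
open Polynomial TensorProduct


lemma pv_simple {M L : Type u} [Field M] [Field L] [CharZero L] [Algebra M L]
    {DM : Derivation ℤ M M} {DL : Derivation ℤ L L}
    (hcomp : ∀ x, DL (algebraMap M L x) = algebraMap M L (DM x)) (hC : ACc DM)
    (hconst : ∀ x, DL x = 0 → ∃ c, algebraMap M L c = x)
    {n : ℕ} (W : Matrix (Fin n) (Fin n) L) (A : Matrix (Fin n) (Fin n) M)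
    (hW : ∀ j i, DL (W j i) = (A.map (algebraMap M L) * W) j i) (hdet : W.det ≠ 0)
    (P : Subalgebra M L) (hPdef : P = Algebra.adjoin M (pvGens W)) (DP : DerZ P)
    (hDP : ∀ x, (DP x : L) = DL x) : DSimple DP := by
  have hPcomp : ∀ x, DP (algebraMap M P x) = algebraMap M P (DM x) := by
    intro x; apply Subtype.ext; rw [hDP]; exact hcomp x
  haveI : Algebra.FiniteType M P :=
    (Subalgebra.fg_iff_finiteType _).1 (Subalgebra.fg_def.2 ⟨_, pvGens_finite W, hPdef.symm⟩)
  obtain ⟨m, D', -, hD', hsim⟩ := exists_simple_quot DP ⊥ (by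
    intro x hx
    rw [Ideal.mem_bot] at hx
    rw [hx, map_zero]; exact Ideal.zero_mem _) bot_ne_top
  have hRcomp : ∀ x, D' (algebraMap M (P ⧸ m) x) = algebraMap M (P ⧸ m) (DM x) := by
    intro x
    change D' (Ideal.Quotient.mk m (algebraMap M P x)) = Ideal.Quotient.mk m (algebraMap M P _)
    rw [hD', hPcomp]
  obtain ⟨B, _, _, _, DB, β, hsB, h1, h2, h3, -⟩ := tensor_simple hcomp hRcomp hsim.1
  haveI := hsB.1
  have hACL : ACc DL := hC.transport (algebraMap M L) (fun x => (hcomp x).symm) hconst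
  letI : Algebra M B := ((algebraMap L B).comp (algebraMap M L)).toAlgebra
  have hMB : ∀ x, algebraMap M B x = algebraMap L B (algebraMap M L x) := fun x => rfl
  have hβ : Function.Injective β := hsim.injective β (fun x => (h2 x).symm)
  let f : P →ₐ[M] B := { (algebraMap L B).comp P.val.toRingHom with
    commutes' := fun r => rfl }
  let g : P →ₐ[M] B := { β.comp (Ideal.Quotient.mk m) with
    commutes' := fun r => h3 r }
  have hf : ∀ x, f x = algebraMap L B (x : L) := fun x => rfl
  have hg : ∀ x, g x = β (Ideal.Quotient.mk m x) := fun x => rfl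
  have hfi : Function.Injective f := (algebraMap L B).injective.comp Subtype.val_injective
  have hfD : ∀ x, DB (f x) = f (DP x) := by
    intro x; rw [hf, hf, h1, hDP]
  have hgD : ∀ x, DB (g x) = g (DP x) := by
    intro x; exact (h2 _).trans (congrArg β (hD' x))
  -- the matrix in P
  have hWP : ∀ j i, W j i ∈ P := fun j i => hPdef ▸ Algebra.subset_adjoin (Or.inl ⟨(j, i), rfl⟩)
  have hdP : W.det⁻¹ ∈ P := hPdef ▸ Algebra.subset_adjoin (Or.inr rfl)
  let WP : Matrix (Fin n) (Fin n) P := Matrix.of fun j i => ⟨W j i, hWP j i⟩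
  have hWPmap : WP.map P.val = W := rfl
  have hWPdet : ((WP.det : P) : L) = W.det := by
    have := (P.val.toRingHom.map_det WP)
    exact this
  let d : P := ⟨W.det⁻¹, hdP⟩
  have hd : d * WP.det = 1 := by
    apply Subtype.ext
    change W.det⁻¹ * ((WP.det : P) : L) = 1
    rw [hWPdet, inv_mul_cancel₀ hdet]
  have hDWP : ∀ j i, DP (WP j i) = (A.map (algebraMap M P) * WP) j i := by
    intro j i
    apply Subtype.ext
    rw [hDP]
    change DL (W j i) = P.val ((A.map (algebraMap M P) * WP) j i)
    rw [hW, Matrix.mul_apply, Matrix.mul_apply, map_sum]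
    rfl
  have htop : Algebra.adjoin M (Set.range (fun p : Fin n × Fin n => WP p.1 p.2) ∪ {d}) = ⊤ := by
    have hinj : Function.Injective (Subalgebra.map P.val) :=
      Subalgebra.map_injective Subtype.val_injective
    apply hinj
    rw [AlgHom.map_adjoin, Algebra.map_top, Subalgebra.range_val]
    refine Eq.trans ?_ hPdef.symm
    congr 1
    rw [Set.image_union, ← Set.range_comp, Set.image_singleton]
    rfl
  have hY : ∀ (h : P →ₐ[M] B), (∀ x, DB (h x) = h (DP x)) → ∀ j i, DB ((WP.map h) j i) =
      (A.map (algebraMap M B) * WP.map h) j i := by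
    intro h hh j i
    rw [Matrix.map_apply, hh, hDWP, Matrix.mul_apply, Matrix.mul_apply, map_sum]
    apply Finset.sum_congr rfl
    intro l _
    simp
  -- inverse matrix
  have hWinv : W⁻¹ * W = 1 := Matrix.nonsing_inv_mul _ (isUnit_iff_ne_zero.2 hdet)
  have hWinv' : W * W⁻¹ = 1 := Matrix.mul_nonsing_inv _ (isUnit_iff_ne_zero.2 hdet)
  let Vm : Matrix (Fin n) (Fin n) B := (W⁻¹).map (algebraMap L B)
  have hfW : WP.map f = W.map (algebraMap L B) := rfl
  have hV : Vm * WP.map f = 1 := by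
    rw [hfW, ← Matrix.map_mul, hWinv]; simp
  have hV' : WP.map f * Vm = 1 := by
    rw [hfW, ← Matrix.map_mul, hWinv']; simp
  let Z := Vm * WP.map g
  have hZ : WP.map g = WP.map f * Z := by
    rw [← Matrix.mul_assoc, hV', Matrix.one_mul]
  have hZc := matrix_const (DB := DB) _ (WP.map f) (WP.map g) Z Vm (hY f hfD) (hY g hgD) hV hZ
  have hZM : ∀ j i, ∃ c : M, algebraMap M B c = Z j i := by
    intro j i
    obtain ⟨c, hc, hc'⟩ := simple_const h1 hACL hsB (hZc j i)
    obtain ⟨c0, hc0⟩ := hconst c hc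
    exact ⟨c0, by rw [hMB, hc0, hc']⟩
  choose c0 hc0 using hZM
  let cm : Matrix (Fin n) (Fin n) M := Matrix.of c0
  have hcm : cm.map (algebraMap M B) = Z := by ext j i; exact hc0 j i
  have hcdet : cm.det ≠ 0 := by
    intro h0
    have e1 : Z.det = 0 := by
      rw [← hcm]
      have := (algebraMap M B).map_det cm
      rw [h0, map_zero] at this
      exact this.symm
    have e2 : (WP.map g).det = 0 := by rw [hZ, Matrix.det_mul, e1, mul_zero]
    have e3 : g WP.det = 0 := by
      rw [← e2]; exact g.toRingHom.map_det WP
    have e4 := congrArg g hd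
    rw [map_mul, e3, mul_zero, map_one] at e4
    exact zero_ne_one e4
  rw [← hcm] at hZ
  have r1 := range_le WP d hd htop f g cm hcdet hZ
  have hcinv : cm * cm⁻¹ = 1 := Matrix.mul_nonsing_inv _ (isUnit_iff_ne_zero.2 hcdet)
  have r2 := range_le WP d hd htop g f cm⁻¹ (by
    intro h0
    have := congrArg Matrix.det hcinv
    rw [Matrix.det_mul, h0, mul_zero, Matrix.det_one] at this
    exact zero_ne_one this) (by
    rw [hZ, Matrix.mul_assoc, ← Matrix.map_mul, hcinv]; simp)
  refine ⟨inferInstance, ?_⟩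
  intro J hJ
  let K : Ideal (P ⧸ m) :=
    { carrier := {r | ∃ p ∈ J, f p = β r}
      add_mem' := by
        rintro a b ⟨p, hp, hp'⟩ ⟨q, hq, hq'⟩
        exact ⟨p + q, J.add_mem hp hq, by rw [map_add, map_add, hp', hq']⟩
      zero_mem' := ⟨0, J.zero_mem, by simp⟩
      smul_mem' := by
        rintro a b ⟨p, hp, hp'⟩
        obtain ⟨a, rfl⟩ := Ideal.Quotient.mk_surjective a
        obtain ⟨q, hq⟩ := r1 a
        exact ⟨q * p, J.mul_mem_left _ hp, by rw [map_mul, smul_eq_mul, map_mul, hp', hq]; rfl⟩ }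
  have hK : DId D' K := by
    rintro r ⟨p, hp, hp'⟩
    exact ⟨DP p, hJ p hp, by rw [← hfD, hp', h2]⟩
  rcases hsim.2 K hK with h | h
  · left
    rw [eq_bot_iff]
    intro p hp
    obtain ⟨q, hq⟩ := r2 p
    have : Ideal.Quotient.mk m q ∈ K := ⟨p, hp, hq.symm⟩
    rw [h, Ideal.mem_bot] at this
    rw [hg, this, map_zero] at hq
    rw [Ideal.mem_bot]
    apply hfi
    rw [← hq, map_zero]
  · right
    have : (1 : P ⧸ m) ∈ K := by rw [h]; trivial
    obtain ⟨p, hp, hp'⟩ := this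
    rw [map_one] at hp'
    have : p = 1 := hfi (by rw [hp', map_one])
    rw [this] at hp
    exact (Ideal.eq_top_iff_one J).2 hp

end PVA


namespace PVA
open Polynomial TensorProduct


lemma field_simple {L : Type u} [Field L] (D : Derivation ℤ L L) : DSimple D :=
  ⟨inferInstance, fun I _ => Ideal.eq_bot_or_top I⟩

/-- derivation on a closed subalgebra -/
noncomputable def algD {M L : Type u} [Field M] [Field L] [Algebra M L] (DL : Derivation ℤ L L)
    (P : Subalgebra M L) (h : ∀ x ∈ P, DL x ∈ P) : DerZ P :=
  mkD (AddMonoidHom.mk' (fun x => ⟨DL x, h x x.2⟩) (by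
      intro a b; apply Subtype.ext; exact map_add DL (a : L) b)) (by
      intro a b; apply Subtype.ext
      change DL ((a : L) * b) = DL a * b + a * DL b
      rw [Derivation.leibniz]; simp only [smul_eq_mul]; ring)

lemma quot_rule {L : Type*} [Field L] (D : Derivation ℤ L L) (p q : L) (hq : q ≠ 0) :
    D (p / q) = (D p * q - p * D q) / (q * q) := by
  have h : D (p / q * q) = D p := by rw [div_mul_cancel₀ _ hq]
  rw [Derivation.leibniz] at h
  simp only [smul_eq_mul] at h
  rw [← h]
  field_simp
  ring

lemma amalg_pv {M Ω L : Type u} [Field M] [Field Ω] [CharZero Ω] [Field L] [CharZero L]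
    [Algebra M Ω] [Algebra M L]
    {DM : Derivation ℤ M M} {DΩ : Derivation ℤ Ω Ω} {DL : Derivation ℤ L L}
    (hΩ : ∀ x, DΩ (algebraMap M Ω x) = algebraMap M Ω (DM x))
    (hcomp : ∀ x, DL (algebraMap M L x) = algebraMap M L (DM x))
    (hC : ACc DM) (hCΩ : ACc DΩ)
    (hconst : ∀ x, DL x = 0 → ∃ c, algebraMap M L c = x)
    {n : ℕ} (W : Matrix (Fin n) (Fin n) L) (A : Matrix (Fin n) (Fin n) M)
    (hW : ∀ j i, DL (W j i) = (A.map (algebraMap M L) * W) j i) (hdet : W.det ≠ 0)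
    (hgen : IntermediateField.adjoin M (pvGens W) = ⊤) :
    ∃ (F : DFld.{u}) (α : Ω →+* F.carrier) (β : L →+* F.carrier),
      (∀ x, α (DΩ x) = F.deriv (α x)) ∧ (∀ x, β (DL x) = F.deriv (β x)) ∧
      (∀ m, α (algebraMap M Ω m) = β (algebraMap M L m)) ∧
      ∀ x, F.deriv x = 0 → ∃ c, DΩ c = 0 ∧ α c = x := by
  obtain ⟨P, hPdef⟩ : ∃ P, P = Algebra.adjoin M (pvGens W) := ⟨_, rfl⟩
  have hcl : ∀ x ∈ P, DL x ∈ P := by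
    rw [hPdef]; exact pv_closed hcomp W A hW hdet
  have hs := pv_simple hcomp hC hconst W A hW hdet P hPdef (algD DL P hcl) (fun x => rfl)
  haveI : Algebra.FiniteType M P :=
    (Subalgebra.fg_iff_finiteType _).1 (Subalgebra.fg_def.2 ⟨_, pvGens_finite W, hPdef.symm⟩)
  obtain ⟨F, α, β, h1, h2, h3, h4, h5⟩ := amalg_ring (DP := algD DL P hcl) hΩ
    (by intro x; apply Subtype.ext; exact hcomp x) hs hCΩ
  have hfrac : ∀ x : L, ∃ p q : P, (q : L) ≠ 0 ∧ x = (p : L) / q := by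
    intro x
    have : x ∈ IntermediateField.adjoin M (pvGens W) := by rw [hgen]; trivial
    rw [IntermediateField.mem_adjoin_iff_div] at this
    obtain ⟨p, hp, q, hq, hx⟩ := this
    rw [← hPdef] at hp hq
    by_cases h0 : q = 0
    · refine ⟨0, 1, by simp, ?_⟩
      rw [hx, h0]; simp
    · exact ⟨⟨p, hp⟩, ⟨q, hq⟩, h0, hx⟩
  haveI : IsFractionRing P L := IsFractionRing.of_field P L (by
    intro x
    obtain ⟨p, q, -, h⟩ := hfrac x
    exact ⟨p, q, h⟩)
  let γ : L →+* F.carrier := IsFractionRing.lift h4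
  have hγ : ∀ p : P, γ (p : L) = β p := fun p => IsFractionRing.lift_algebraMap h4 p
  refine ⟨F, α, γ, h1, ?_, ?_, h5⟩
  · intro x
    obtain ⟨p, q, hq, rfl⟩ := hfrac x
    have hγq : γ q ≠ 0 := by simpa using hq
    rw [quot_rule DL _ _ hq, map_div₀ γ, map_div₀ γ, ← D_apply, quot_rule _ _ _ hγq]
    have e : ∀ p : P, γ (DL p) = F.D (γ p) := by
      intro p
      rw [hγ, D_apply, ← h2, ← hγ]; rfl
    simp only [map_sub, map_mul, e]
  · intro m
    rw [h3, ← hγ]; rfl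

/-- closed subfields -/
def Cl (A : DFld.{u}) (M : Subfield A.carrier) : Prop := ∀ x ∈ M, A.deriv x ∈ M

/-- derivation on a closed subfield -/
noncomputable def subD {A : DFld.{u}} (M : Subfield A.carrier) (h : Cl A M) : DerZ M :=
  mkD (AddMonoidHom.mk' (fun x => ⟨A.deriv x, h x x.2⟩) (by
      intro a b; apply Subtype.ext; exact A.deriv_add (a : A.carrier) b)) (by
      intro a b; apply Subtype.ext; exact A.deriv_mul (a : A.carrier) b)

lemma subD_coe {A : DFld.{u}} (M : Subfield A.carrier) (h : Cl A M) (x : M) :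
    ((subD M h x : M) : A.carrier) = A.deriv x := rfl

lemma subD_iter {A : DFld.{u}} (M : Subfield A.carrier) (h : Cl A M) (x : M) (j : ℕ) :
    (((subD M h)^[j] x : M) : A.carrier) = A.deriv^[j] x := by
  induction j with
  | zero => rfl
  | succ j ih => rw [Function.iterate_succ_apply', Function.iterate_succ_apply', subD_coe, ih]

lemma subfield_map_cl {A : DFld.{u}} (N : Subfield A.carrier) (h : Cl A N) (F : Subfield N)
    (hF : ∀ x ∈ F, subD N h x ∈ F) : Cl A (F.map N.subtype) := by
  rintro _ ⟨x, hx, rfl⟩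
  exact ⟨_, hF x hx, rfl⟩

lemma LApply_sub {A : DFld.{u}} (N : Subfield A.carrier) (h : Cl A N) {n : ℕ}
    (a : Fin n → N) (y : N) : ((LApply (subD N h) n a y : N) : A.carrier) =
      LApply A.deriv n (fun i => (a i : A.carrier)) y := by
  unfold LApply
  have : ∀ (s : Fin n → N), ((∑ i, s i : N) : A.carrier) = ∑ i, (s i : A.carrier) :=
    fun s => map_sum N.subtype s _
  change ((_ : N) : A.carrier) + ((_ : N) : A.carrier) = _
  rw [this, subD_iter]
  congr 1
  apply Finset.sum_congr rfl
  intro i _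
  rw [← subD_iter N h]; rfl

lemma amalg_step {A : DFld.{u}} (M M' : Subfield A.carrier) (hM : Cl A M) (hM' : Cl A M')
    (hle : M ≤ M') (hstep : FinExt M M' ∨ ∃ n a, IsPVWith A.deriv M M' n a)
    (hAC : ACc (subD M hM)) (K : DFld.{u}) (φ : M →+* K.carrier)
    (hφ : ∀ x, φ (subD M hM x) = K.deriv (φ x)) (hc : ∀ x, K.deriv x = 0 → ∃ c, φ c = x) :
    ∃ (K' : DFld.{u}) (α : K.carrier →+* K'.carrier) (β : M' →+* K'.carrier),
      (∀ x, α (K.deriv x) = K'.deriv (α x)) ∧ (∀ x, β (subD M' hM' x) = K'.deriv (β x)) ∧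
      (∀ x : M, β (Subfield.inclusion hle x) = α (φ x)) ∧
      ∀ x, K'.deriv x = 0 → ∃ c, K.deriv c = 0 ∧ α c = x := by
  letI : Algebra M M' := (Subfield.inclusion hle).toAlgebra
  letI : Algebra M K.carrier := φ.toAlgebra
  have hΩ : ∀ x, K.D (algebraMap M K.carrier x) = algebraMap M K.carrier (subD M hM x) :=
    fun x => (hφ x).symm
  have hcomp : ∀ x, subD M' hM' (algebraMap M M' x) = algebraMap M M' (subD M hM x) :=
    fun x => rfl
  have hACK : ACc K.D := hAC.transport φ hφ hc
  rcases hstep with ⟨_, hfin⟩ | ⟨n, a, -, -, -, hcon, ha, y, hy, hL, hind, hgen⟩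
  · haveI : Module.Finite M M' := hfin
    obtain ⟨F, α, β, h1, h2, h3, h4, h5⟩ := amalg_ring (DP := subD M' hM') hΩ hcomp
      (field_simple _) hACK
    exact ⟨F, α, β, h1, h2, fun x => (h3 x).symm, h5⟩
  · let a' : Fin n → M' := fun i => ⟨a i, hle (ha i)⟩
    let y' : Fin n → M' := fun i => ⟨y i, hy i⟩
    let M0 : Subfield M' := M.comap M'.subtype
    have hL' : ∀ i, LApply (subD M' hM') n a' (y' i) = 0 := by
      intro i
      apply Subtype.ext
      rw [LApply_sub]; exact hL i
    obtain ⟨A0, hA0, hA0'⟩ := companion (D := subD M' hM') M0 a' (fun i => ha i)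
    let Am : Matrix (Fin n) (Fin n) M := Matrix.of fun j i => ⟨(A0 j i : A.carrier), hA0 j i⟩
    let W : Matrix (Fin n) (Fin n) M' := Matrix.of fun j i => (subD M' hM')^[(j : ℕ)] (y' i)
    have hAm : Am.map (algebraMap M M') = A0 := by ext j i; rfl
    have hW : ∀ j i, subD M' hM' (W j i) = (A0 * W) j i := by
      intro j i
      rw [Matrix.mul_apply]
      exact hA0' (y' i) (hL' i) j
    have hconst : ∀ x, subD M' hM' x = 0 → ∃ c, algebraMap M M' c = x := by
      intro x hx
      exact ⟨⟨x, hcon x x.2 (by rw [← subD_coe M' hM', hx]; rfl)⟩, rfl⟩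
    have hdet : W.det ≠ 0 := by
      intro h0
      obtain ⟨c, hc0, hcD, hWc⟩ := wronskian W A0 hW h0
      apply hc0
      rcases Nat.eq_zero_or_pos n with hn | hn
      · subst hn; exact Subsingleton.elim _ _
      have e := congrFun hWc ⟨0, hn⟩
      have e' : ∑ i, c i * y' i = 0 := by
        rw [Pi.zero_apply] at e
        rw [← e, Matrix.mulVec, dotProduct]
        apply Finset.sum_congr rfl
        intro i _
        rw [mul_comm]; rfl
      have := hind (fun i => (c i : A.carrier)) (fun i =>
        ⟨hcon _ (c i).2 (by rw [← subD_coe M' hM', hcD]; rfl),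
          by rw [← subD_coe M' hM', hcD]; rfl⟩) (by
          have := congrArg M'.subtype e'
          rw [map_sum] at this
          exact this)
      funext i
      exact Subtype.ext (this i)
    have hW' : ∀ j i, subD M' hM' (W j i) = (Am.map (algebraMap M M') * W) j i := by
      rw [hAm]; exact hW
    have hcl := pv_closed (DM := subD M hM) hcomp W Am hW' hdet
    have hgen' : IntermediateField.adjoin M (pvGens W) = ⊤ := by
      rw [eq_top_iff]
      rintro x -
      let I := IntermediateField.adjoin M (pvGens W)
      have hI : Cl A (I.toSubfield.map M'.subtype) := by
        apply subfield_map_cl M' hM'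
        intro x hx
        have hx : x ∈ IntermediateField.adjoin M (pvGens W) := hx
        change _ ∈ IntermediateField.adjoin M (pvGens W)
        rw [IntermediateField.mem_adjoin_iff_div] at hx
        obtain ⟨p, hp, q, hq, rfl⟩ := hx
        have hA : ∀ z ∈ Algebra.adjoin M (pvGens W), z ∈ IntermediateField.adjoin M (pvGens W) :=
          fun z hz => IntermediateField.algebra_adjoin_le_adjoin _ _ hz
        by_cases h0 : q = 0
        · rw [h0, div_zero, map_zero]; exact zero_mem _
        · rw [quot_rule _ _ _ h0]
          exact div_mem (sub_mem (mul_mem (hA _ (hcl p hp)) (hA _ hq))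
            (mul_mem (hA _ hp) (hA _ (hcl q hq)))) (mul_mem (hA _ hq) (hA _ hq))
      have hle2 : M' ≤ I.toSubfield.map M'.subtype := by
        refine le_trans hgen.ge ?_
        apply sInf_le
        refine ⟨?_, ?_, hI⟩
        · intro m hm
          exact ⟨⟨m, hle hm⟩, I.algebraMap_mem ⟨m, hm⟩, rfl⟩
        · rintro _ ⟨i, rfl⟩
          have hn : 0 < n := lt_of_le_of_lt (Nat.zero_le _) i.2
          exact ⟨y' i, IntermediateField.subset_adjoin _ _ (Or.inl ⟨(⟨0, hn⟩, i), rfl⟩), rfl⟩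
      obtain ⟨z, hz, hzx⟩ := hle2 x.2
      have : z = x := Subtype.ext hzx
      rw [← this]; exact hz
    obtain ⟨F, α, β, h1, h2, h3, h4⟩ := amalg_pv hΩ hcomp hAC hACK hconst W Am hW' hdet hgen'
    exact ⟨F, α, β, h1, h2, fun x => (h3 x).symm, h4⟩

end PVA


namespace PVA
open Polynomial TensorProduct


/-- one step of a tower -/
def Step (A : DFld.{u}) (d : ℕ) (M M' : Subfield A.carrier) : Prop :=
  Cl A M ∧ Cl A M' ∧ M ≤ M' ∧
    (FinExt M M' ∨ ∃ n ≤ d, ∃ a : Fin n → A.carrier, IsPVWith A.deriv M M' n a)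

/-- towers -/
def Tow (A : DFld.{u}) (d : ℕ) : Subfield A.carrier → Subfield A.carrier → Prop :=
  Relation.ReflTransGen (Step A d)

lemma finExt_iff {E : Type u} [Field E] (M K : Subfield E) : FinExt M K ↔
    M ≤ K ∧ ∃ s : Set E, s.Finite ∧ (∀ x ∈ s, M.subtype.IsIntegralElem x) ∧
      Subfield.closure ((M : Set E) ∪ s) = K := by
  constructor
  · rintro ⟨hle, hfin⟩
    letI : Algebra M K := (Subfield.inclusion hle).toAlgebra
    haveI : Module.Finite M K := hfin
    refine ⟨hle, ?_⟩
    obtain ⟨s, hs⟩ := hfin.fg_top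
    refine ⟨Subtype.val '' (s : Set K), s.finite_toSet.image _, ?_, ?_⟩
    · rintro _ ⟨x, -, rfl⟩
      obtain ⟨p, hp, hpx⟩ := Algebra.IsIntegral.isIntegral (R := M) x
      refine ⟨p, hp, ?_⟩
      have := congrArg K.subtype hpx
      rw [hom_eval₂, map_zero] at this
      exact this
    · apply le_antisymm
      · rw [Subfield.closure_le]
        rintro x (hx | ⟨y, -, rfl⟩)
        · exact hle hx
        · exact y.2
      · intro x hx
        have : (⟨x, hx⟩ : K) ∈ Submodule.span M (s : Set K) := by rw [hs]; trivial
        suffices h : ∀ z ∈ Submodule.span M (s : Set K),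
            (z : E) ∈ Subfield.closure ((M : Set E) ∪ Subtype.val '' (s : Set K)) from h _ this
        intro z hz
        induction hz using Submodule.span_induction with
        | mem z hz => exact Subfield.subset_closure (Or.inr ⟨z, hz, rfl⟩)
        | zero => exact zero_mem _
        | add a b _ _ h1 h2 => exact add_mem h1 h2
        | smul c a _ h => exact mul_mem (Subfield.subset_closure (Or.inl c.2)) h
  · rintro ⟨hle, s, hsf, hsi, hcl⟩
    refine ⟨hle, ?_⟩
    letI : Algebra M K := (Subfield.inclusion hle).toAlgebra
    change Module.Finite M K
    haveI := hsf.to_subtype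
    haveI : FiniteDimensional M (IntermediateField.adjoin M s) :=
      IntermediateField.finiteDimensional_adjoin hsi
    have hmem : ∀ x, x ∈ IntermediateField.adjoin M s ↔ x ∈ K := by
      intro x
      rw [← hcl]
      change x ∈ Subfield.closure (Set.range (algebraMap M E) ∪ s) ↔ _
      have : Set.range (algebraMap M E) = (M : Set E) := by
        ext y; simp [Subfield.algebraMap_ofSubfield]
      rw [this]
    let f : IntermediateField.adjoin M s →ₗ[M] K :=
      { toFun := fun x => ⟨x, (hmem x).1 x.2⟩
        map_add' := fun _ _ => rfl
        map_smul' := fun _ _ => rfl }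
    exact Module.Finite.of_surjective f (fun x => ⟨⟨x, (hmem x).2 x.2⟩, rfl⟩)

lemma Step.le {A : DFld.{u}} {d : ℕ} {M M' : Subfield A.carrier} (h : Step A d M M') : M ≤ M' :=
  h.2.2.1

lemma Tow.le {A : DFld.{u}} {d : ℕ} {M M' : Subfield A.carrier} (h : Tow A d M M') : M ≤ M' := by
  induction h with
  | refl => exact le_rfl
  | tail _ h ih => exact ih.trans h.le

lemma Tow.cl {A : DFld.{u}} {d : ℕ} {M M' : Subfield A.carrier} (h : Tow A d M M')
    (h0 : Cl A M) : Cl A M' := by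
  induction h with
  | refl => exact h0
  | tail _ h ih => exact h.2.1

lemma ACc_sub {A : DFld.{u}} {M M' : Subfield A.carrier} (hM : Cl A M) (hM' : Cl A M')
    (hle : M ≤ M') (hc : ∀ x ∈ M', A.deriv x = 0 → x ∈ M) (h : ACc (subD M hM)) :
    ACc (subD M' hM') :=
  h.transport (Subfield.inclusion hle) (fun _ => rfl) (fun x hx =>
    ⟨⟨x, hc x x.2 (by rw [← subD_coe M' hM', hx]; rfl)⟩, rfl⟩)

lemma Step.const {A : DFld.{u}} {d : ℕ} {M M' : Subfield A.carrier} (h : Step A d M M')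
    (hAC : ACc (subD M h.1)) : ∀ x ∈ M', A.deriv x = 0 → x ∈ M := by
  obtain ⟨hM, hM', hle, ⟨_, hfin⟩ | ⟨n, _, a, -, -, -, hcon, -⟩⟩ := h
  · letI : Algebra M M' := (Subfield.inclusion hle).toAlgebra
    haveI : Module.Finite M M' := hfin
    intro x hx hD
    obtain ⟨c, -, hc⟩ := alg_const (K := M) (B := M') (DK := subD M hM) (DB := subD M' hM')
      (b := ⟨x, hx⟩) (fun x => rfl) hAC (Subtype.ext hD) (Algebra.IsIntegral.isIntegral _)
    have := congrArg Subtype.val hc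
    rw [← show (c : A.carrier) = x from this]
    exact c.2
  · exact hcon

lemma Tow.const {A : DFld.{u}} {d : ℕ} {M M' : Subfield A.carrier} (h : Tow A d M M')
    (h0 : Cl A M) (hAC : ACc (subD M h0)) : ∀ x ∈ M', A.deriv x = 0 → x ∈ M := by
  induction h with
  | refl => exact fun x hx _ => hx
  | tail h1 h ih =>
    intro x hx hD
    exact ih x (h.const (ACc_sub h0 h.1 (Tow.le h1) ih hAC) x hx hD) hD

lemma amalg_tow {A : DFld.{u}} {d : ℕ} {M M' : Subfield A.carrier} (h : Tow A d M M')
    (hM : Cl A M) (hAC : ACc (subD M hM)) (K : DFld.{u}) (φ : M →+* K.carrier)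
    (hφ : ∀ x, φ (subD M hM x) = K.deriv (φ x)) (hc : ∀ x, K.deriv x = 0 → ∃ c, φ c = x) :
    ∃ (K' : DFld.{u}) (α : K.carrier →+* K'.carrier) (β : M' →+* K'.carrier),
      (∀ x, α (K.deriv x) = K'.deriv (α x)) ∧
      (∀ x, β (subD M' (h.cl hM) x) = K'.deriv (β x)) ∧
      (∀ x : M, β (Subfield.inclusion h.le x) = α (φ x)) ∧
      ∀ x, K'.deriv x = 0 → ∃ c, K.deriv c = 0 ∧ α c = x := by
  induction h with
  | refl => exact ⟨K, RingHom.id _, φ, fun _ => rfl, hφ, fun x => rfl, fun x hx => ⟨x, hx, rfl⟩⟩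
  | tail h1 h ih =>
    obtain ⟨K1, α1, β1, a1, b1, c1, d1⟩ := ih
    obtain ⟨K2, α2, β2, a2, b2, c2, d2⟩ := amalg_step _ _ h.1 h.2.1 h.le
      (h.2.2.2.imp id (fun ⟨n, _, a, h⟩ => ⟨n, a, h⟩))
      (ACc_sub hM h.1 (Tow.le h1) (Tow.const h1 hM hAC) hAC) K1 β1 b1 (by
        intro x hx
        obtain ⟨c, hcc, rfl⟩ := d1 x hx
        obtain ⟨c0, rfl⟩ := hc c hcc
        exact ⟨_, c1 c0⟩)
    refine ⟨K2, α2.comp α1, β2, ?_, b2, ?_, ?_⟩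
    · intro x; simp [a1, a2]
    · intro x
      have := c2 (Subfield.inclusion (Tow.le h1) x)
      rw [c1] at this
      exact this
    · intro x hx
      obtain ⟨c, hc1, rfl⟩ := d2 x hx
      obtain ⟨c', hc2, rfl⟩ := d1 c hc1
      exact ⟨c', hc2, rfl⟩

lemma cl_sup {A : DFld.{u}} {F M : Subfield A.carrier} (hF : Cl A F) (hM : Cl A M) :
    Cl A (F ⊔ M) := by
  have e : F ⊔ M = Subfield.closure ((F : Set A.carrier) ∪ M) := by
    rw [Subfield.closure_union, Subfield.closure_eq, Subfield.closure_eq]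
  intro x hx
  rw [e] at hx ⊢
  change A.D x ∈ _
  induction hx using Subfield.closure_induction with
  | mem x hx =>
    rcases hx with hx | hx
    · exact Subfield.subset_closure (Or.inl (hF x hx))
    · exact Subfield.subset_closure (Or.inr (hM x hx))
  | one => rw [Derivation.map_one_eq_zero]; exact zero_mem _
  | add x y _ _ h1 h2 => rw [map_add]; exact add_mem h1 h2
  | neg x _ h => rw [map_neg]; exact neg_mem h
  | inv x hx h =>
    by_cases h0 : x = 0
    · rw [h0, inv_zero, map_zero]; exact zero_mem _
    · rw [← one_div, quot_rule _ _ _ h0, Derivation.map_one_eq_zero]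
      exact div_mem (sub_mem (mul_mem (zero_mem _) hx) (mul_mem (one_mem _) h)) (mul_mem hx hx)
  | mul x y hx hy h1 h2 =>
    rw [Derivation.leibniz]
    exact add_mem (mul_mem hx h2) (mul_mem hy h1)

lemma diffGen_spec {E : Type u} [Field E] (D : E → E) (k : Subfield E) (S : Set E) :
    k ≤ diffGen D k S ∧ S ⊆ diffGen D k S ∧ ∀ x ∈ diffGen D k S, D x ∈ diffGen D k S := by
  refine ⟨le_sInf fun F hF => hF.1, ?_, ?_⟩
  · intro x hx
    rw [diffGen, SetLike.mem_coe, Subfield.mem_sInf]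
    exact fun F hF => hF.2.1 hx
  · intro x hx
    rw [diffGen, Subfield.mem_sInf] at hx ⊢
    exact fun F hF => hF.2.2 x (hx F hF)

lemma diffGen_le {E : Type u} [Field E] {D : E → E} {k : Subfield E} {S : Set E} {F : Subfield E}
    (h1 : k ≤ F) (h2 : S ⊆ F) (h3 : ∀ x ∈ F, D x ∈ F) : diffGen D k S ≤ F :=
  sInf_le ⟨h1, h2, h3⟩

lemma Step.sup {A : DFld.{u}} {d : ℕ} {F M M' : Subfield A.carrier} (hF : Cl A F)
    (h : Step A d M M') (hc : ∀ x ∈ F ⊔ M', A.deriv x = 0 → x ∈ M) :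
    Step A d (F ⊔ M) (F ⊔ M') := by
  obtain ⟨hM, hM', hle, h⟩ := h
  have hle' : F ⊔ M ≤ F ⊔ M' := sup_le_sup_left hle F
  refine ⟨cl_sup hF hM, cl_sup hF hM', hle', ?_⟩
  rcases h with h | ⟨n, hn, a, -, -, -, hcon, ha, y, hy, hL, hind, hgen⟩
  · left
    rw [finExt_iff] at h ⊢
    obtain ⟨-, s, hs, hi, hcl⟩ := h
    refine ⟨hle', s, hs, ?_, ?_⟩
    · intro x hx
      obtain ⟨p, hp, hpx⟩ := hi x hx
      refine ⟨p.map (Subfield.inclusion (le_sup_right : M ≤ F ⊔ M)), hp.map _, ?_⟩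
      rw [eval₂_map]; exact hpx
    · rw [← hcl, Subfield.closure_union, Subfield.closure_union, Subfield.closure_eq,
        Subfield.closure_eq, sup_assoc]
  · right
    refine ⟨n, hn, a, hle', cl_sup hF hM, cl_sup hF hM', fun x hx h0 =>
      (le_sup_right : M ≤ F ⊔ M) (hc x hx h0), fun i => (le_sup_right : M ≤ F ⊔ M) (ha i), y,
      fun i => (le_sup_right : M' ≤ F ⊔ M') (hy i), hL, ?_, ?_⟩
    · intro c hcc
      exact hind c (fun i => ⟨hc _ (hle' (hcc i).1) (hcc i).2, (hcc i).2⟩)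
    · apply le_antisymm
      · apply diffGen_le hle' _ (cl_sup hF hM')
        rintro _ ⟨i, rfl⟩
        exact (le_sup_right : M' ≤ F ⊔ M') (hy i)
      · obtain ⟨g1, g2, g3⟩ := diffGen_spec A.deriv (F ⊔ M) (Set.range y)
        apply sup_le (le_sup_left.trans g1)
        rw [← hgen]
        exact diffGen_le (le_sup_right.trans g1) g2 g3

lemma Tow.sup {A : DFld.{u}} {d : ℕ} {F M M' : Subfield A.carrier} (hF : Cl A F)
    (h : Tow A d M M') (hc : ∀ x ∈ F ⊔ M', A.deriv x = 0 → x ∈ M) :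
    Tow A d (F ⊔ M) (F ⊔ M') := by
  induction h with
  | refl => exact Relation.ReflTransGen.refl
  | tail h1 h ih =>
    refine Relation.ReflTransGen.tail (ih fun x hx => hc x (sup_le_sup_left h.le F hx))
      (h.sup hF fun x hx h0 => Tow.le h1 (hc x hx h0))

/-- image under a partial hom -/
def img {A B : DFld.{u}} (N : Subfield A.carrier) (β : N →+* B.carrier) (M : Subfield A.carrier) :
    Subfield B.carrier := (M.comap N.subtype).map β

lemma mem_img {A B : DFld.{u}} {N : Subfield A.carrier} {β : N →+* B.carrier}
    {M : Subfield A.carrier} {y : B.carrier} : y ∈ img N β M ↔ ∃ x : N, (x : A.carrier) ∈ M ∧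
      β x = y := Iff.rfl

lemma img_le {A B : DFld.{u}} {N : Subfield A.carrier} {β : N →+* B.carrier}
    {M : Subfield A.carrier} (hMN : M ≤ N) {G : Subfield B.carrier} :
    img N β M ≤ G ↔ M ≤ (G.comap β).map N.subtype := by
  constructor
  · intro h x hx
    exact ⟨⟨x, hMN hx⟩, h ⟨⟨x, hMN hx⟩, hx, rfl⟩, rfl⟩
  · rintro h _ ⟨x, hx, rfl⟩
    obtain ⟨z, hz, hzx⟩ := h hx
    have : z = x := Subtype.ext hzx
    subst this
    exact hz

lemma iter_img {A B : DFld.{u}} {N : Subfield A.carrier} (hN : Cl A N) {β : N →+* B.carrier}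
    (hβ : ∀ x, β (subD N hN x) = B.deriv (β x)) (j : ℕ) (x : N) :
    β ((subD N hN)^[j] x) = B.deriv^[j] (β x) := by
  induction j with
  | zero => rfl
  | succ j ih => rw [Function.iterate_succ_apply', Function.iterate_succ_apply', hβ, ih]

lemma Step.img {A B : DFld.{u}} {d : ℕ} {N M M' : Subfield A.carrier} (hN : Cl A N)
    {β : N →+* B.carrier} (hβ : ∀ x, β (subD N hN x) = B.deriv (β x)) (h : Step A d M M')
    (hMN : M' ≤ N) : Step B d (img N β M) (img N β M') := by
  have hcl : ∀ G, Cl A G → Cl B (PVA.img N β G) := by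
    rintro G hG _ ⟨x, hx, rfl⟩
    exact ⟨subD N hN x, hG _ hx, hβ x⟩
  have hmono : ∀ {G G' : Subfield A.carrier}, G ≤ G' → PVA.img N β G ≤ PVA.img N β G' := by
    rintro G G' hG _ ⟨x, hx, rfl⟩
    exact ⟨x, hG hx, rfl⟩
  obtain ⟨hM, hM', hle, h⟩ := h
  refine ⟨hcl _ hM, hcl _ hM', hmono hle, ?_⟩
  rcases h with h | ⟨n, hn, a, -, -, -, hcon, ha, y, hy, hL, hind, hgen⟩
  · left
    rw [finExt_iff] at h ⊢
    obtain ⟨-, s, hs, hi, hcl⟩ := h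
    have hsM : s ⊆ M' := by
      rw [← hcl]; exact fun x hx => Subfield.subset_closure (Or.inr hx)
    refine ⟨hmono hle, β '' (Subtype.val ⁻¹' s), ?_, ?_, ?_⟩
    · exact (hs.preimage Subtype.val_injective.injOn).image _
    · rintro _ ⟨x, hx, rfl⟩
      obtain ⟨p, hp, hpx⟩ := hi _ hx
      let ι : M →+* N := Subfield.inclusion (hle.trans hMN)
      let γ : M →+* PVA.img N β M := (β.comp ι).codRestrict _ (fun z => ⟨ι z, z.2, rfl⟩)
      refine ⟨p.map γ, hp.map _, ?_⟩
      rw [eval₂_map]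
      have e1 : eval₂ ι x p = 0 := by
        apply N.subtype.injective
        rw [hom_eval₂, map_zero]; exact hpx
      have e2 := congrArg β e1
      rw [hom_eval₂, map_zero] at e2
      exact e2
    · apply le_antisymm
      · rw [Subfield.closure_le]
        rintro _ (hx | ⟨x, hx, rfl⟩)
        · exact hmono hle hx
        · exact ⟨x, hsM hx, rfl⟩
      · rw [img_le hMN, ← hcl, Subfield.closure_le]
        rintro x (hx | hx)
        · exact ⟨⟨x, hMN (hle hx)⟩, Subfield.subset_closure (Or.inl ⟨⟨x, _⟩, hx, rfl⟩), rfl⟩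
        · exact ⟨⟨x, hMN (hsM hx)⟩, Subfield.subset_closure (Or.inr ⟨⟨x, _⟩, hx, rfl⟩), rfl⟩
  · right
    let a' : Fin n → N := fun i => ⟨a i, hMN (hle (ha i))⟩
    let y' : Fin n → N := fun i => ⟨y i, hMN (hy i)⟩
    refine ⟨n, hn, fun i => β (a' i), hmono hle, hcl _ hM, hcl _ hM', ?_, ?_, fun i => β (y' i),
      ?_, ?_, ?_, ?_⟩
    · rintro _ ⟨x, hx, rfl⟩ h0
      refine ⟨x, hcon x hx ?_, rfl⟩
      rw [← hβ] at h0
      have : subD N hN x = 0 := β.injective (by rw [h0, map_zero])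
      rw [← subD_coe N hN, this]; rfl
    · exact fun i => ⟨a' i, ha i, rfl⟩
    · exact fun i => ⟨y' i, hy i, rfl⟩
    · intro i
      have e : LApply (subD N hN) n a' (y' i) = 0 := by
        apply Subtype.ext; rw [LApply_sub]; exact hL i
      have e2 := congrArg β e
      unfold LApply at e2 ⊢
      rw [map_add, map_sum, iter_img hN hβ, map_zero] at e2
      rw [← e2]
      congr 1
      apply Finset.sum_congr rfl
      intro j _
      rw [map_mul, iter_img hN hβ]
    · intro c hc hsum
      have hc' : ∀ i, ∃ x : N, (x : A.carrier) ∈ M ∧ β x = c i := fun i => (hc i).1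
      choose c' hc1 hc2 using hc'
      have hc3 : ∀ i, A.deriv (c' i : A.carrier) = 0 := by
        intro i
        have h0 := (hc i).2
        rw [← hc2, ← hβ] at h0
        have : subD N hN (c' i) = 0 := β.injective (by rw [h0, map_zero])
        rw [← subD_coe N hN, this]; rfl
      have hs : ∑ i, c' i * y' i = 0 := by
        apply β.injective
        rw [map_sum, map_zero, ← hsum]
        apply Finset.sum_congr rfl
        intro i _
        rw [map_mul, hc2]
      have := hind (fun i => (c' i : A.carrier)) (fun i => ⟨hc1 i, hc3 i⟩) (by
        have := congrArg N.subtype hs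
        rw [map_sum] at this
        exact this)
      intro i
      have h0 : c' i = 0 := Subtype.ext (this i)
      rw [← hc2, h0, map_zero]
    · apply le_antisymm
      · apply diffGen_le (hmono hle) _ (hcl _ hM')
        rintro _ ⟨i, rfl⟩
        exact ⟨y' i, hy i, rfl⟩
      · obtain ⟨g1, g2, g3⟩ := diffGen_spec B.deriv (PVA.img N β M)
          (Set.range fun i => β (y' i))
        rw [img_le hMN]
        refine le_trans hgen.ge ?_
        apply diffGen_le
        · rw [← img_le (hle.trans hMN)]; exact g1
        · rintro _ ⟨i, rfl⟩
          exact ⟨y' i, g2 ⟨i, rfl⟩, rfl⟩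
        · rintro _ ⟨x, hx, rfl⟩
          refine ⟨subD N hN x, ?_, rfl⟩
          refine Subfield.mem_comap.2 ?_
          rw [hβ]; exact g3 _ hx

lemma Tow.img {A B : DFld.{u}} {d : ℕ} {N M M' : Subfield A.carrier} (hN : Cl A N)
    {β : N →+* B.carrier} (hβ : ∀ x, β (subD N hN x) = B.deriv (β x)) (h : Tow A d M M')
    (hMN : M' ≤ N) : Tow B d (img N β M) (img N β M') := by
  induction h with
  | refl => exact Relation.ReflTransGen.refl
  | tail h1 h ih => exact (ih (h.le.trans hMN)).tail (h.img hN hβ hMN)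

lemma Tow.map {A B : DFld.{u}} {d : ℕ} {M M' : Subfield A.carrier}
    (f : A.carrier →+* B.carrier) (hf : ∀ x, f (A.deriv x) = B.deriv (f x)) (h : Tow A d M M') :
    Tow B d (M.map f) (M'.map f) := by
  have hN : Cl A ⊤ := fun _ _ => trivial
  have := h.img hN (β := f.comp (⊤ : Subfield A.carrier).subtype) (fun x => hf x) le_top
  have e : ∀ G : Subfield A.carrier,
      PVA.img ⊤ (f.comp (⊤ : Subfield A.carrier).subtype) G = G.map f := by
    intro G
    ext y
    constructor
    · rintro ⟨x, hx, rfl⟩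
      exact ⟨x, hx, rfl⟩
    · rintro ⟨x, hx, rfl⟩
      exact ⟨⟨x, trivial⟩, hx, rfl⟩
  rwa [e, e] at this

lemma Tow.toNat {A : DFld.{u}} {d : ℕ} {M M' : Subfield A.carrier} (h : Tow A d M M')
    (h0 : Cl A M) : ∃ (r : ℕ) (T : ℕ → Subfield A.carrier), T 0 = M ∧ T r = M' ∧
      (∀ i, Cl A (T i)) ∧ ∀ i < r, Step A d (T i) (T (i + 1)) := by
  induction h with
  | refl => exact ⟨0, fun _ => M, rfl, rfl, fun _ => h0, fun i hi => absurd hi (by omega)⟩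
  | @tail b c h1 h ih =>
    obtain ⟨r, T, t0, tr, tc, ts⟩ := ih
    refine ⟨r + 1, fun i => if i ≤ r then T i else c, ?_, ?_, ?_, ?_⟩
    · simp [t0]
    · simp
    · intro i
      dsimp only
      split_ifs
      · exact tc i
      · exact h.2.1
    · intro i hi
      by_cases hir : i = r
      · subst hir
        simp only [le_refl, if_true]
        rw [if_neg (by omega), tr]; exact h
      · dsimp only
        rw [if_pos (by omega), if_pos (by omega)]
        exact ts i (by omega)

lemma dsolv_of_tow {E : Type u} [Field E] {D : E → E} {k Kf : Subfield E} {d : ℕ} (Ω : DFld.{u})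
    (j : E →+* Ω.carrier) (hj : ∀ x, j (D x) = Ω.deriv (j x)) (hk : Cl Ω (k.map j))
    {T : Subfield Ω.carrier} (h : Tow Ω d (k.map j) T) (hle : Kf.map j ≤ T) :
    IsDSolvable D k Kf d := by
  obtain ⟨r, T', t0, tr, tc, ts⟩ := h.toNat hk
  refine ⟨Ω, j, hj, r, fun i => T' i, t0, ?_, fun i => tc i, fun i => (ts i i.2).2.2.2⟩
  simpa [tr] using hle

lemma tow_of_fin {A : DFld.{u}} {d r : ℕ} (T : Fin (r + 1) → Subfield A.carrier)
    (hcl : ∀ i, ∀ x ∈ T i, A.deriv x ∈ T i)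
    (hs : ∀ i : Fin r, FinExt (T i.castSucc) (T i.succ) ∨
        ∃ n ≤ d, ∃ a : Fin n → A.carrier, IsPVWith A.deriv (T i.castSucc) (T i.succ) n a) :
    Tow A d (T 0) (T (Fin.last r)) := by
  have : ∀ i, Tow A d (T 0) (T i) := by
    intro i
    induction i using Fin.induction with
    | zero => exact Relation.ReflTransGen.refl
    | succ i ih =>
      refine ih.tail ⟨hcl _, hcl _, ?_, hs i⟩
      rcases hs i with ⟨h, _⟩ | ⟨n, _, a, h, _⟩
      · exact h
      · exact h
  exact this _

end PVA


namespace PVA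
open Polynomial TensorProduct

lemma map_cl {A B : DFld.{u}} (f : A.carrier →+* B.carrier)
    (hf : ∀ x, f (A.deriv x) = B.deriv (f x)) {M : Subfield A.carrier} (h : Cl A M) :
    Cl B (M.map f) := by
  rintro _ ⟨x, hx, rfl⟩
  exact ⟨_, h x hx, hf x⟩

lemma ACc_map {A B : DFld.{u}} (f : A.carrier →+* B.carrier)
    (hf : ∀ x, f (A.deriv x) = B.deriv (f x)) {M : Subfield A.carrier} (h : Cl A M)
    (hAC : ACc (subD M h)) : ACc (subD (M.map f) (map_cl f hf h)) := by
  refine hAC.transport ((f.comp M.subtype).codRestrict _ (fun z => ⟨z, z.2, rfl⟩)) ?_ ?_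
  · intro x
    apply Subtype.ext
    exact hf x
  · rintro ⟨_, x, hx, rfl⟩ -
    exact ⟨⟨x, hx⟩, rfl⟩

lemma ext_claim {E : DFld.{u}} {k : Subfield E.carrier} (hk : Cl E k) (hAC : ACc (subD k hk))
    {d : ℕ} (K : DFld.{u}) (e : E.carrier →+* K.carrier)
    (he : ∀ x, e (E.deriv x) = K.deriv (e x))
    (hKc : ∀ x, K.deriv x = 0 → ∃ c ∈ k, e c = x) (v : E.carrier)
    (hv : IsDSolvable E.deriv k (diffGen E.deriv k {v}) d) :
    ∃ (K' : DFld.{u}) (α : K.carrier →+* K'.carrier),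
      (∀ x, α (K.deriv x) = K'.deriv (α x)) ∧
      (∀ x, K'.deriv x = 0 → ∃ c ∈ k, α (e c) = x) ∧
      ∃ T, Tow K' d (k.map (α.comp e)) T ∧ α (e v) ∈ T := by
  obtain ⟨Ω, j, hj, r, T, t0, tle, tc, ts⟩ := hv
  have htow := tow_of_fin T tc ts
  rw [t0] at htow
  set Tr := T (Fin.last r) with hTr
  obtain ⟨g1, g2, g3⟩ := diffGen_spec E.deriv k {v}
  set G := diffGen E.deriv k {v} with hG
  have hk' := map_cl j hj hk
  have hAC' := ACc_map j hj hk hAC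
  have hcon := htow.const hk' hAC'
  have hTrc : Cl Ω Tr := tc _
  have hF : Cl Ω (G.map j) := map_cl j hj g3
  have hkF : k.map j ≤ G.map j := by
    rintro _ ⟨x, hx, rfl⟩
    exact ⟨x, g1 hx, rfl⟩
  have htow2 := htow.sup (F := G.map j) hF (by
    rw [sup_eq_right.2 tle]; exact hcon)
  rw [sup_eq_right.2 tle, sup_eq_left.2 hkF] at htow2
  let ψ : E.carrier ≃+* j.fieldRange := RingEquiv.ofBijective j.rangeRestrictField
    ⟨fun a b h => j.injective (congrArg Subtype.val h), fun ⟨_, x, hx⟩ => ⟨x, Subtype.ext hx⟩⟩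
  have hle : G.map j ≤ j.fieldRange := by
    rintro _ ⟨x, hx, rfl⟩
    exact ⟨x, rfl⟩
  let φ : (G.map j : Subfield Ω.carrier) →+* K.carrier :=
    e.comp (ψ.symm.toRingHom.comp (Subfield.inclusion hle))
  have hφ : ∀ (x : E.carrier) (h : j x ∈ G.map j), φ ⟨j x, h⟩ = e x := by
    intro x h
    change e (ψ.symm (ψ x)) = _
    rw [RingEquiv.symm_apply_apply]
  obtain ⟨K', α, β, a1, b1, c1, d1⟩ := amalg_tow htow2 hF
    (ACc_sub hk' hF hkF (fun x hx => hcon x (tle hx)) hAC') K φ (by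
      rintro ⟨_, x, hx, rfl⟩
      have : subD (G.map j) hF ⟨j x, ⟨x, hx, rfl⟩⟩ = ⟨j (E.deriv x), ⟨_, g3 x hx, rfl⟩⟩ :=
        Subtype.ext (hj x).symm
      refine (congrArg φ this).trans ((hφ _ _).trans ?_)
      exact (he x).trans (congrArg K.deriv (hφ x _)).symm) (by
      intro x hx
      obtain ⟨c, hc, rfl⟩ := hKc x hx
      exact ⟨⟨j c, ⟨c, g1 hc, rfl⟩⟩, hφ _ _⟩)
  have key : ∀ x ∈ G, ∃ h : j x ∈ Tr, β ⟨j x, h⟩ = α (e x) := by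
    intro x hx
    have h1 : j x ∈ G.map j := ⟨x, hx, rfl⟩
    refine ⟨tle h1, ?_⟩
    have := c1 ⟨j x, h1⟩
    rw [hφ] at this
    exact this
  refine ⟨K', α, a1, ?_, img Tr β Tr, ?_, ?_⟩
  · intro x hx
    obtain ⟨c, hc, rfl⟩ := d1 x hx
    obtain ⟨c', hc', rfl⟩ := hKc c hc
    exact ⟨c', hc', rfl⟩
  · have := htow.img hTrc b1 le_rfl
    have e1 : img Tr β (k.map j) = k.map (α.comp e) := by
      ext y
      constructor
      · rintro ⟨⟨z, hz⟩, hx, rfl⟩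
        obtain ⟨x, hx, hxz⟩ := hx
        obtain ⟨h, h'⟩ := key x (g1 hx)
        refine ⟨x, hx, ?_⟩
        change α (e x) = _
        rw [← h']
        congr 1
        exact Subtype.ext hxz
      · rintro ⟨x, hx, rfl⟩
        obtain ⟨h, h'⟩ := key x (g1 hx)
        exact ⟨⟨j x, h⟩, ⟨x, hx, rfl⟩, h'⟩
    rwa [e1] at this
  · obtain ⟨h, h'⟩ := key v (g2 rfl)
    exact ⟨⟨j v, h⟩, h, h'⟩

lemma dsolv_add {E : DFld.{u}} {k : Subfield E.carrier} (hk : Cl E k) (hAC : ACc (subD k hk))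
    (hEc : ∀ x, E.deriv x = 0 → x ∈ k) {d : ℕ} (v w : E.carrier)
    (hv : IsDSolvable E.deriv k (diffGen E.deriv k {v}) d)
    (hw : IsDSolvable E.deriv k (diffGen E.deriv k {w}) d) :
    IsDSolvable E.deriv k (diffGen E.deriv k {v + w}) d := by
  obtain ⟨K1, α1, a1, b1, T1, t1, m1⟩ := ext_claim hk hAC E (RingHom.id _) (fun _ => rfl)
    (fun x hx => ⟨x, hEc x hx, rfl⟩) v hv
  rw [RingHom.comp_id] at t1
  obtain ⟨K2, α2, a2, b2, T2, t2, m2⟩ := ext_claim hk hAC K1 α1 a1 b1 w hw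
  have hj : ∀ x, (α2.comp α1) (E.deriv x) = K2.deriv ((α2.comp α1) x) := by
    intro x
    simp only [RingHom.comp_apply]
    rw [← a2]; exact congrArg α2 (a1 x)
  have hk2 : Cl K2 (k.map (α2.comp α1)) := map_cl _ hj hk
  have t1' := t1.map α2 a2
  rw [Subfield.map_map] at t1'
  have hc1 : Cl K2 (T1.map α2) := t1'.cl hk2
  have t3 := t2.sup (F := T1.map α2) hc1 (by
    intro x _ hx
    obtain ⟨c, hc, rfl⟩ := b2 x hx
    exact ⟨c, hc, rfl⟩)
  rw [sup_eq_left.2 t1'.le] at t3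
  have t4 : Tow K2 d _ _ := Relation.ReflTransGen.trans t1' t3
  refine dsolv_of_tow K2 (α2.comp α1) hj hk2 t4 ?_
  have hcl := t4.cl hk2
  rw [Subfield.map_le_iff_le_comap]
  apply diffGen_le
  · rw [← Subfield.map_le_iff_le_comap]; exact t4.le
  · rintro _ rfl
    rw [SetLike.mem_coe, Subfield.mem_comap, map_add]
    exact add_mem ((le_sup_left : T1.map α2 ≤ _) ⟨_, m1, rfl⟩) ((le_sup_right : T2 ≤ _) m2)
  · intro x hx
    rw [Subfield.mem_comap] at hx ⊢
    rw [hj]; exact hcl _ hx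

lemma dsolv_mono {E : Type u} [Field E] {D : E → E} {k K1 K2 : Subfield E} {d : ℕ}
    (h : IsDSolvable D k K1 d) (hle : K2 ≤ K1) : IsDSolvable D k K2 d := by
  obtain ⟨Ω, j, hj, r, T, t0, tle, h⟩ := h
  refine ⟨Ω, j, hj, r, T, t0, le_trans ?_ tle, h⟩
  rintro _ ⟨x, hx, rfl⟩
  exact ⟨x, hle hx, rfl⟩

lemma ACc_of_closed {E : DFld.{u}} {k : Subfield E.carrier} (hk : Cl E k)
    (hC : IsAlgClosed ↥(constantsOf E.D k)) : ACc (subD k hk) := by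
  have hle : constantsOf E.D k ≤ k := fun x hx => hx.1
  intro p hm hd hp
  have hl : p ∈ lifts (Subfield.inclusion hle) := by
    rw [lifts_iff_coeff_lifts]
    intro i
    refine ⟨⟨p.coeff i, (p.coeff i).2, ?_⟩, rfl⟩
    have := hp i
    change E.deriv _ = 0
    rw [← subD_coe k hk, this]; rfl
  obtain ⟨q, hq, hqd, hqm⟩ := lifts_and_natDegree_eq_and_monic hl hm
  obtain ⟨c, hc⟩ := IsAlgClosed.exists_root q (by
    rw [degree_eq_natDegree hqm.ne_zero]
    have : q.natDegree ≠ 0 := by omega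
    exact_mod_cast this)
  refine ⟨Subfield.inclusion hle c, Subtype.ext c.2.2, ?_⟩
  rw [← hq, eval_map, eval₂_at_apply, hc.eq_zero, map_zero]

lemma iter_add {E : Type*} [Field E] (D : Derivation ℤ E E) (m : ℕ) (x y : E) :
    D^[m] (x + y) = D^[m] x + D^[m] y := by
  induction m with
  | zero => rfl
  | succ m ih => simp only [Function.iterate_succ_apply', ih, map_add]

lemma iter_cmul {E : Type*} [Field E] (D : Derivation ℤ E E) (m : ℕ) (c x : E) (hc : D c = 0) :
    D^[m] (c * x) = c * D^[m] x := by
  induction m with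
  | zero => rfl
  | succ m ih => simp [Function.iterate_succ_apply', ih, hc]

lemma LApply_add {E : Type u} [Field E] (D : Derivation ℤ E E) {n : ℕ} (a : Fin n → E) (x y : E) :
    LApply D n a (x + y) = LApply D n a x + LApply D n a y := by
  simp only [LApply, iter_add, mul_add, Finset.sum_add_distrib]; ring

lemma LApply_cmul {E : Type u} [Field E] (D : Derivation ℤ E E) {n : ℕ} (a : Fin n → E) (c x : E)
    (hc : D c = 0) : LApply D n a (c * x) = c * LApply D n a x := by
  simp only [LApply, iter_cmul D _ c x hc, mul_add, Finset.mul_sum]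
  congr 1
  apply Finset.sum_congr rfl
  intro i _; ring

lemma iter_sigma {E : Type*} [Field E] (D : Derivation ℤ E E) (σ : E ≃+* E)
    (h : ∀ x, σ (D x) = D (σ x)) (m : ℕ) (x : E) : σ (D^[m] x) = D^[m] (σ x) := by
  induction m with
  | zero => rfl
  | succ m ih => simp only [Function.iterate_succ_apply', ih, h]

lemma sigma_mem {E : Type u} [Field E] (D : Derivation ℤ E E) (k : Subfield E)
    {n d : ℕ} (a : Fin n → E) (ha : ∀ i, a i ∈ k) (σ : E ≃+* E) (h1 : ∀ x ∈ k, σ x = x)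
    (h : ∀ x, σ (D x) = D (σ x)) (y : E) (hy : LApply D n a y = 0)
    (hs : IsDSolvable D k (diffGen D k {y}) d) :
    LApply D n a (σ y) = 0 ∧ IsDSolvable D k (diffGen D k {σ y}) d := by
  have h1' : ∀ x ∈ k, σ.symm x = x := fun x hx => by
    rw [RingEquiv.symm_apply_eq, h1 x hx]
  have h' : ∀ x, σ.symm (D x) = D (σ.symm x) := fun x => by
    rw [RingEquiv.symm_apply_eq, h, RingEquiv.apply_symm_apply]
  constructor
  · have := congrArg σ hy
    rw [map_zero] at this
    rw [← this]
    simp only [LApply, map_add, map_sum, map_mul, iter_sigma D σ h, h1 _ (ha _)]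
  · obtain ⟨Ω, j, hj, r, T, t0, tle, tc, ts⟩ := hs
    refine ⟨Ω, j.comp σ.symm.toRingHom, ?_, r, T, ?_, ?_, tc, ts⟩
    · intro x
      change j (σ.symm (D x)) = Ω.deriv (j (σ.symm x))
      rw [h', hj]
    · rw [t0]
      ext z
      constructor
      · rintro ⟨x, hx, rfl⟩
        exact ⟨x, hx, congrArg j (h1' x hx)⟩
      · rintro ⟨x, hx, rfl⟩
        exact ⟨x, hx, (congrArg j (h1' x hx)).symm⟩
    · refine le_trans ?_ tle
      rw [← Subfield.map_map]
      have : (diffGen D k {σ y}).map σ.symm.toRingHom ≤ diffGen D k {y} := by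
        obtain ⟨g1, g2, g3⟩ := diffGen_spec D k {y}
        rw [Subfield.map_le_iff_le_comap]
        apply diffGen_le
        · intro x hx
          change σ.symm x ∈ diffGen D k {y}
          rw [h1' x hx]; exact g1 hx
        · rintro _ rfl
          change σ.symm (σ y) ∈ diffGen D k {y}
          rw [RingEquiv.symm_apply_apply]; exact g2 rfl
        · intro x hx
          change σ.symm (D x) ∈ diffGen D k {y}
          rw [h']; exact g3 _ hx
      rintro _ ⟨x, hx, rfl⟩
      exact ⟨x, this hx, rfl⟩

end PVA

/-- Let `E` be a Picard–Vessiot extension of `k` for a monic operator `L`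
and `d ≥ 1`. The set `V` of solutions `y ∈ E` of `L(y) = 0` such that `k⟨y⟩` is `d`-solvable
over `k` is a vector space over the constants `C` of `k`, stable under every differential
automorphism of `E` over `k`. -/
theorem stmt15 {E : Type u} [Field E] [CharZero E] (D : Derivation ℤ E E)
    (k : Subfield E) (hk : ∀ x ∈ k, D x ∈ k)
    (hC : IsAlgClosed ↥(constantsOf D k))
    (n : ℕ) (a : Fin n → E) (hPV : IsPVWith (⇑D) k ⊤ n a)
    (d : ℕ) (hd : 0 < d)
    (V : Set E)
    (hV : V = {y : E | LApply (⇑D) n a y = 0 ∧ IsDSolvable (⇑D) k (diffGen (⇑D) k {y}) d}) :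
    (0 ∈ V) ∧
    (∀ u ∈ V, ∀ v ∈ V, u + v ∈ V) ∧
    (∀ v ∈ V, -v ∈ V) ∧
    (∀ c ∈ constantsOf D k, ∀ v ∈ V, c * v ∈ V) ∧
    ∀ σ : E ≃+* E, (∀ x ∈ k, σ x = x) → (∀ x : E, σ (D x) = D (σ x)) → σ '' V = V := by
  subst hV
  obtain ⟨-, -, -, hcon, ha, -⟩ := hPV
  have hmul : ∀ c ∈ constantsOf D k, ∀ v, LApply (⇑D) n a v = 0 ∧
      IsDSolvable (⇑D) k (diffGen (⇑D) k {v}) d → LApply (⇑D) n a (c * v) = 0 ∧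
      IsDSolvable (⇑D) k (diffGen (⇑D) k {c * v}) d := by
    rintro c ⟨hck, hc0⟩ v ⟨h1, h2⟩
    refine ⟨by rw [PVA.LApply_cmul D a c v hc0, h1, mul_zero], PVA.dsolv_mono h2 ?_⟩
    obtain ⟨g1, g2, g3⟩ := PVA.diffGen_spec D k {v}
    refine PVA.diffGen_le g1 ?_ g3
    rintro _ rfl
    exact mul_mem (g1 hck) (g2 rfl)
  have hzero : LApply (⇑D) n a 0 = 0 ∧ IsDSolvable (⇑D) k (diffGen (⇑D) k {0}) d := by
    constructor
    · have := PVA.LApply_cmul D a 0 0 (map_zero D)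
      rwa [zero_mul, zero_mul] at this
    · have hid : ∀ G : Subfield E, G.map (RingHom.id E) = G := by
        intro G
        ext x
        exact ⟨fun ⟨y, hy, h⟩ => h ▸ hy, fun h => ⟨x, h, rfl⟩⟩
      refine ⟨PVA.toDFld D, RingHom.id E, fun _ => rfl, 0, fun _ => k, (hid k).symm, ?_,
        fun _ => hk, fun i => i.elim0⟩
      refine le_trans (hid _).le ?_
      refine PVA.diffGen_le le_rfl ?_ hk
      rintro _ rfl
      exact k.zero_mem
  refine ⟨hzero, ?_, ?_, hmul, ?_⟩
  · rintro u ⟨hu1, hu2⟩ v ⟨hv1, hv2⟩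
    refine ⟨by rw [PVA.LApply_add, hu1, hv1, add_zero], ?_⟩
    exact PVA.dsolv_add (E := PVA.toDFld D) (k := k) hk
      (PVA.ACc_of_closed (E := PVA.toDFld D) (k := k) hk hC)
      (fun x hx => hcon x trivial hx) u v hu2 hv2
  · intro v hv
    have := hmul (-1) ⟨neg_mem (one_mem k), by rw [map_neg, D.map_one_eq_zero, neg_zero]⟩ v hv
    rwa [neg_one_mul] at this
  · intro σ h1 h2
    have h1' : ∀ x ∈ k, σ.symm x = x := fun x hx => by
      rw [RingEquiv.symm_apply_eq, h1 x hx]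
    have h2' : ∀ x, σ.symm (D x) = D (σ.symm x) := fun x => by
      rw [RingEquiv.symm_apply_eq, h2, RingEquiv.apply_symm_apply]
    apply Set.Subset.antisymm
    · rintro _ ⟨y, ⟨hy1, hy2⟩, rfl⟩
      exact PVA.sigma_mem D k a ha σ h1 h2 y hy1 hy2
    · rintro y ⟨hy1, hy2⟩
      exact ⟨σ.symm y, PVA.sigma_mem D k a ha σ.symm h1' h2' y hy1 hy2, σ.apply_symm_apply y⟩
end

section
/- Let C be an algebraically closed field of characteristic zero, regarded as a differential field with zero derivation, let E be a Picard–Vessiot extension of C for some monic linear differential operator over C, and let K be an intermediate differential field, C ⊆ K ⊆ E. Then there exist l ≥ 0 and elements y₁,…,y_l ∈ K such that K = C(y₁,…,y_l) (the subfield generated by C and y₁,…,y_l), yᵢ′/yᵢ ∈ C for all i = 2,…,l, and either y₁′ = 1 or y₁′/y₁ ∈ C. -/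
universe u

/-- exponential monoid -/
def PVexp {E : Type u} [Field E] (D : Derivation ℤ E E) (G : AddSubgroup E) : Submonoid E where
  carrier := {e | e ≠ 0 ∧ ∃ r ∈ G, D e = r * e}
  one_mem' := ⟨one_ne_zero, 0, G.zero_mem, by simp⟩
  mul_mem' := by
    rintro a b ⟨ha, r, hr, hra⟩ ⟨hb, s, hs, hsb⟩
    refine ⟨mul_ne_zero ha hb, r + s, G.add_mem hr hs, ?_⟩
    rw [D.leibniz, hra, hsb]
    simp only [smul_eq_mul]
    ring

theorem pv_div {E : Type u} [Field E] (D : Derivation ℤ E E) (a b : E) (hb : b ≠ 0) :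
    D (a / b) = (D a * b - a * D b) / b ^ 2 := by
  rw [D.leibniz_div]
  simp only [smul_eq_mul]
  field_simp

theorem pv_closure_stable {E : Type u} [Field E] (D : Derivation ℤ E E) (S : Set E)
    (h : ∀ a ∈ S, D a ∈ Subfield.closure S) : ∀ x ∈ Subfield.closure S, D x ∈ Subfield.closure S := by
  intro x hx
  induction hx using Subfield.closure_induction with
  | mem x hx => exact h x hx
  | one => rw [D.map_one_eq_zero]; exact zero_mem _
  | add x y hx hy h1 h2 => rw [map_add]; exact add_mem h1 h2
  | neg x hx h1 => rw [map_neg]; exact neg_mem h1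
  | inv x hx h1 =>
    rw [D.leibniz_inv, smul_eq_mul]
    exact mul_mem (neg_mem (pow_mem (inv_mem hx) _)) h1
  | mul x y hx hy h1 h2 =>
    rw [D.leibniz]
    exact add_mem (mul_mem hx h2) (mul_mem hy h1)

/-- derivation restricted to a stable subfield -/
def pvRestrict {E : Type u} [Field E] (D : Derivation ℤ E E) (K : Subfield E)
    (hK : ∀ x ∈ K, D x ∈ K) : Derivation ℤ K K :=
  Derivation.mk' (AddMonoidHom.toIntLinearMap
    { toFun := fun x => (⟨D x, hK x x.2⟩ : K)
      map_zero' := by ext; simp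
      map_add' := fun x y => by ext; simp })
    (fun a b => by ext; simp)

theorem pv_transc {E : Type u} [Field E] [CharZero E] (D : Derivation ℤ E E) (K : Subfield E)
    (hK : ∀ x ∈ K, D x ∈ K) (hconst : ∀ x, D x = 0 → x ∈ K) (x : E) (hx : D x = 1)
    (hxK : x ∉ K) : Transcendental K x := by
  intro hal
  have hint : IsIntegral K x := hal.isIntegral
  let _ : Differential K := ⟨pvRestrict D K hK⟩
  let _ : Differential E := ⟨D⟩
  have : DifferentialAlgebra K E := ⟨fun a => rfl⟩
  have h1 := Differential.deriv_aeval_eq (A := K) x (minpoly K x)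
  have h0 : (Differential.deriv : Derivation ℤ E E) = D := rfl
  rw [minpoly.aeval, h0, hx, map_zero, mul_one, ← map_add] at h1
  have hmon := minpoly.monic hint
  have hdpos := minpoly.natDegree_pos hint
  set p := minpoly K x with hp
  set q := Differential.mapCoeffs p + Polynomial.derivative p with hq
  have hcoef : ∀ i, p.natDegree ≤ i → q.coeff i = 0 := by
    intro i hi
    rw [hq, Polynomial.coeff_add, Differential.coeff_mapCoeffs, Polynomial.coeff_derivative,
      Polynomial.coeff_eq_zero_of_natDegree_lt (by omega : p.natDegree < i + 1), zero_mul, add_zero]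
    rcases hi.eq_or_lt with h | h
    · rw [← h, hmon.coeff_natDegree, Derivation.map_one_eq_zero]
    · rw [Polynomial.coeff_eq_zero_of_natDegree_lt h, map_zero]
  have hq0 : q = 0 := by
    by_contra hne
    have h2 : p.degree ≤ q.degree := minpoly.degree_le_of_ne_zero K x hne h1.symm
    have h3 : p.natDegree ≤ q.natDegree := Polynomial.natDegree_le_natDegree h2
    exact hne (Polynomial.leadingCoeff_eq_zero.mp (hcoef _ h3))
  have h4 : q.coeff (p.natDegree - 1) = 0 := by rw [hq0, Polynomial.coeff_zero]
  rw [hq, Polynomial.coeff_add, Differential.coeff_mapCoeffs, Polynomial.coeff_derivative,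
    Nat.sub_add_cancel hdpos, hmon.coeff_natDegree, one_mul] at h4
  set a := p.coeff (p.natDegree - 1) with ha
  have h5 : D (a : E) + (p.natDegree : E) = 0 := by
    have := congrArg (fun z : K => (z : E)) h4
    have hh : (((Differential.deriv : Derivation ℤ K K) a : K) : E) = D (a : E) := rfl
    simp only [Subfield.coe_add, hh, Subfield.coe_zero] at this
    rw [← this, Nat.cast_sub (by omega)]
    push_cast; ring
  have hd0 : (p.natDegree : E) ≠ 0 := by exact_mod_cast hdpos.ne'
  have h6 : D ((p.natDegree : E) * x + a) = 0 := by
    rw [map_add, D.leibniz, hx, D.map_natCast, smul_zero, add_zero, smul_eq_mul, mul_one, add_comm,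
      h5]
  have h7 := hconst _ h6
  apply hxK
  have h8 : x = ((p.natDegree : E) * x + a - a) / (p.natDegree : E) := by
    field_simp; ring
  rw [h8]
  exact div_mem (sub_mem h7 a.2) (natCast_mem K _)

/-- A basis of exponentials -/
theorem pv_basis {E : Type u} [Field E] (D : Derivation ℤ E E) (G : AddSubgroup E) (K : Subfield E)
    (hK : ∀ x ∈ K, D x ∈ K) (hconst : ∀ x, D x = 0 → x ∈ K) (hGK : ∀ g ∈ G, g ∈ K) 
    (hconst0 : ∀ x, D x = 0 → x ∈ K) :
    ∃ (ι : Type u) (b lam : ι → E), (∀ i, b i ≠ 0) ∧ (∀ i, b i ∈ PVexp D G) ∧ (∀ i, lam i ∈ G) ∧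
      (∀ i, D (b i) = lam i * b i) ∧
      (∀ (s : Finset ι) (g : ι → E), (∀ i, g i ∈ K) → ∑ i ∈ s, g i * b i = 0 → ∀ i ∈ s, g i = 0) ∧
      (∀ e ∈ PVexp D G, ∃ i, ∃ k ∈ K, k ∈ PVexp D G ∧ e = k * b i) := by
  obtain ⟨B, hBM, hspan, hind⟩ := exists_linearIndependent K (PVexp D G : Set E)
  have hBM' : ∀ i : B, ∃ r ∈ G, D (i : E) = r * i := fun i => (hBM i.2).2
  choose lam hlamG hlam using hBM'
  have hind' : ∀ (s : Finset B) (g : B → E), (∀ i, g i ∈ K) → ∑ i ∈ s, g i * (i : E) = 0 →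
      ∀ i ∈ s, g i = 0 := by
    intro s g hg hs i hi
    have := linearIndependent_iff'.mp hind s (fun i => ⟨g i, hg i⟩) hs i hi
    exact congrArg Subtype.val this
  refine ⟨B, fun i => i, lam, fun i => (hBM i.2).1, fun i => hBM i.2, hlamG, hlam, hind', ?_⟩
  intro e he
  have he1 : e ∈ Submodule.span K B := by rw [hspan]; exact Submodule.subset_span he
  obtain ⟨he0, r, hr, hre⟩ := he
  rw [← Subtype.range_coe (s := B)] at he1
  obtain ⟨l, hl⟩ := (Finsupp.mem_span_range_iff_exists_finsupp).mp he1
  have hl' : ∑ i ∈ l.support, (l i : E) * (i : E) = e := hl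
  have hne : l.support.Nonempty := by
    rw [Finset.nonempty_iff_ne_empty]
    intro h
    rw [h, Finset.sum_empty] at hl'
    exact he0 hl'.symm
  obtain ⟨i, hi⟩ := hne
  have hz : ∑ i ∈ l.support, (D (l i : E) + (lam i - r) * (l i : E)) * (i : E) = 0 := by
    have h1 : D e - r * e = 0 := by rw [hre, sub_self]
    rw [← hl', map_sum, Finset.mul_sum, ← Finset.sum_sub_distrib] at h1
    rw [← h1]
    refine Finset.sum_congr rfl fun j _ => ?_
    rw [D.leibniz, hlam]
    simp only [smul_eq_mul]
    ring
  have h2 := hind' _ (fun i => D (l i : E) + (lam i - r) * (l i : E))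
    (fun i => add_mem (hK _ (l i).2) (mul_mem (sub_mem (hGK _ (hlamG i)) (hGK _ hr)) (l i).2)) hz i hi
  have hli : (l i : E) ≠ 0 := by
    intro h
    exact (Finsupp.mem_support_iff.mp hi) (Subtype.ext h)
  have hi0 : (i : E) ≠ 0 := (hBM i.2).1
  have hDl : D (l i : E) = (r - lam i) * l i := by linear_combination h2
  have hw : D (e / ((l i : E) * i)) = 0 := by
    rw [pv_div _ _ _ (mul_ne_zero hli hi0), D.leibniz, hre, hlam, hDl]
    simp only [smul_eq_mul]
    rw [div_eq_zero_iff]; left; ring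
  have hwK := hconst0 _ hw
  have hek : e / i ∈ K := by
    have : e / i = (e / ((l i : E) * i)) * l i := by field_simp
    rw [this]; exact mul_mem hwK (l i).2
  refine ⟨i, e / i, hek, ⟨div_ne_zero he0 hi0, r - lam i, G.sub_mem hr (hlamG i), ?_⟩, ?_⟩
  · rw [pv_div _ _ _ hi0, hre, hlam]; field_simp
  · field_simp

theorem pv_expand {E : Type u} [Field E] (D : Derivation ℤ E E) (G : AddSubgroup E)
    (K0 : Subfield E) {ι : Type u} (b : ι → E)
    (hb : ∀ e ∈ PVexp D G, ∃ i, ∃ k ∈ K0, e = k * b i) (v : E)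
    (hv : v ∈ Submodule.span K0 (PVexp D G : Set E)) :
    ∃ l : ι →₀ K0, ∀ s, l.support ⊆ s → v = ∑ i ∈ s, (l i : E) * b i := by
  have h1 : Submodule.span K0 (PVexp D G : Set E) ≤ Submodule.span K0 (Set.range b) := by
    rw [Submodule.span_le]
    intro e he
    obtain ⟨i, k, hk, rfl⟩ := hb e he
    exact Submodule.smul_mem _ (⟨k, hk⟩ : K0) (Submodule.subset_span ⟨i, rfl⟩)
  obtain ⟨l, hl⟩ := (Finsupp.mem_span_range_iff_exists_finsupp).mp (h1 hv)
  refine ⟨l, fun s hs => ?_⟩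
  rw [← hl, Finsupp.sum_of_support_subset _ hs _ (by simp)]
  rfl

theorem pv_core {E : Type u} [Field E] (D : Derivation ℤ E E) (G : AddSubgroup E) (K K0 : Subfield E)
    (hK : ∀ x ∈ K, D x ∈ K) (hconst : ∀ x, D x = 0 → x ∈ K) (hGK : ∀ g ∈ G, g ∈ K)
    (hK0 : K0 ≤ K) (hM : ∀ e ∈ PVexp D G, e ∈ K → e ∈ K0) (p q f : E) (hf : f ∈ K)
    (hp : p ∈ Submodule.span K0 (PVexp D G : Set E))
    (hq : q ∈ Submodule.span K0 (PVexp D G : Set E)) (hq0 : q ≠ 0) (h : p = f * q) : f ∈ K0 := by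
  classical
  obtain ⟨ι, b, lam, hb0, hbM, hlamG, hlam, hind, hspan⟩ := pv_basis D G K hK hconst hGK hconst
  have hb : ∀ e ∈ PVexp D G, ∃ i, ∃ k ∈ K0, e = k * b i := by
    intro e he
    obtain ⟨i, k, hk, hkM, hh⟩ := hspan e he
    exact ⟨i, k, hM k hkM hk, hh⟩
  obtain ⟨l, hl⟩ := pv_expand D G K0 b hb p hp
  obtain ⟨m, hm⟩ := pv_expand D G K0 b hb q hq
  have h1 := hl (l.support ∪ m.support) Finset.subset_union_left
  have h2 := hm (l.support ∪ m.support) Finset.subset_union_right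
  have h3 : ∑ i ∈ l.support ∪ m.support, ((l i : E) - f * m i) * b i = 0 := by
    have : p - f * q = 0 := by rw [h, sub_self]
    rw [h1, h2, Finset.mul_sum, ← Finset.sum_sub_distrib] at this
    rw [← this]
    exact Finset.sum_congr rfl fun j _ => by ring
  have h4 := hind _ (fun i => (l i : E) - f * m i)
    (fun i => sub_mem (hK0 (l i).2) (mul_mem hf (hK0 (m i).2))) h3
  have h5 : ∃ i, (m i : E) ≠ 0 := by
    by_contra hcon
    push Not at hcon
    apply hq0
    rw [h2]
    exact Finset.sum_eq_zero fun i _ => by rw [hcon i, zero_mul]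
  obtain ⟨i, hi⟩ := h5
  have h6 := h4 i (Finset.mem_union_right _ (Finsupp.mem_support_iff.mpr
    (fun hh => hi (by rw [hh]; rfl))))
  have h7 : f = l i / m i := by
    rw [eq_div_iff hi]; linear_combination -h6
  rw [h7]
  exact div_mem (l i).2 (m i).2

theorem pv_span_stable {E : Type u} [Field E] (D : Derivation ℤ E E) (G : AddSubgroup E)
    (K : Subfield E) (hK : ∀ x ∈ K, D x ∈ K) (hGK : ∀ g ∈ G, g ∈ K) (p : E)
    (hp : p ∈ Submodule.span K (PVexp D G : Set E)) :
    D p ∈ Submodule.span K (PVexp D G : Set E) := by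
  induction hp using Submodule.span_induction with
  | mem x hx =>
    obtain ⟨h0, r, hr, hx1⟩ := hx
    rw [hx1]
    exact Submodule.smul_mem _ (⟨r, hGK r hr⟩ : K) (Submodule.subset_span ⟨h0, r, hr, hx1⟩)
  | zero => rw [map_zero]; exact zero_mem _
  | add x y _ _ h1 h2 => rw [map_add]; exact add_mem h1 h2
  | smul a x hx h1 =>
    have : D (a • x) = a • D x + (⟨D a, hK a a.2⟩ : K) • x := by
      change D ((a : E) * x) = (a : E) * D x + D a * x
      rw [D.leibniz, smul_eq_mul, smul_eq_mul]; ring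
    rw [this]
    exact add_mem (Submodule.smul_mem _ _ h1) (Submodule.smul_mem _ _ hx)

theorem pv_x_mem {E : Type u} [Field E] (D : Derivation ℤ E E) (G : AddSubgroup E) (K : Subfield E)
    (hK : ∀ x ∈ K, D x ∈ K) (hconst : ∀ x, D x = 0 → x ∈ K) (hGK : ∀ g ∈ G, g ∈ K)
    (p q x : E) (hx : D x = 1)
    (hp : p ∈ Submodule.span K (PVexp D G : Set E))
    (hq : q ∈ Submodule.span K (PVexp D G : Set E)) (hq0 : q ≠ 0) (h : p = x * q) : x ∈ K := by
  classical
  obtain ⟨ι, b, lam, hb0, hbM, hlamG, hlam, hind, hspan⟩ := pv_basis D G K hK hconst hGK hconst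
  have hb : ∀ e ∈ PVexp D G, ∃ i, ∃ k ∈ K, e = k * b i := by
    intro e he
    obtain ⟨i, k, hk, hkM, hh⟩ := hspan e he
    exact ⟨i, k, hk, hh⟩
  have hDsum : ∀ (s : Finset ι) (g : ι → E) (μ : E), D (∑ i ∈ s, g i * b i) - μ * ∑ i ∈ s, g i * b i
      = ∑ i ∈ s, (D (g i) + (lam i - μ) * g i) * b i := by
    intro s g μ
    rw [map_sum, Finset.mul_sum, ← Finset.sum_sub_distrib]
    refine Finset.sum_congr rfl fun j _ => ?_
    rw [D.leibniz, hlam]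
    simp only [smul_eq_mul]
    ring
  have key : ∀ (n : ℕ) (s : Finset ι), s.card = n → ∀ (g : ι → E), (∀ i, g i ∈ K) →
      ∑ i ∈ s, g i * b i ≠ 0 → ∀ p ∈ Submodule.span K (PVexp D G : Set E),
      p = x * ∑ i ∈ s, g i * b i → x ∈ K := by
    intro n
    induction n with
    | zero =>
      intro s hs g _ h0
      rw [Finset.card_eq_zero] at hs
      subst hs
      simp at h0
    | succ n ih =>
      intro s hs g hg h0 p hp hpx
      obtain ⟨i0, hi0, hgi0⟩ : ∃ i ∈ s, g i ≠ 0 := by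
        by_contra hcon
        push Not at hcon
        exact h0 (Finset.sum_eq_zero fun i hi => by rw [hcon i hi, zero_mul])
      set μ := D (g i0) / g i0 + lam i0 with hμ
      have hμK : μ ∈ K := add_mem (div_mem (hK _ (hg _)) (hg _)) (hGK _ (hlamG _))
      have hgg : ∀ i, D (g i) + (lam i - μ) * g i ∈ K := fun i =>
        add_mem (hK _ (hg _)) (mul_mem (sub_mem (hGK _ (hlamG _)) hμK) (hg _))
      set Q := ∑ i ∈ s, g i * b i with hQ
      have h1 := hDsum s g μ
      rw [← hQ] at h1
      have hz : D (g i0) + (lam i0 - μ) * g i0 = 0 := by rw [hμ]; field_simp; ring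
      have hDp : D p - μ * p - Q = x * (D Q - μ * Q) := by
        rw [hpx, D.leibniz, hx]
        simp only [smul_eq_mul]
        ring
      by_cases h2 : D Q - μ * Q = 0
      · -- final step
        obtain ⟨l, hl⟩ := pv_expand D G K b hb p hp
        have h3 := hl (l.support ∪ s) Finset.subset_union_left
        have h4 := hDsum (l.support ∪ s) (fun i => (l i : E)) μ
        rw [← h3] at h4
        rw [h2] at hDp h1
        have h5 : Q = ∑ i ∈ l.support ∪ s, (if i ∈ s then g i else 0) * b i := by
          rw [hQ]
          rw [← Finset.sum_subset (Finset.subset_union_right : s ⊆ l.support ∪ s)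
            (f := fun i => (if i ∈ s then g i else 0) * b i)]
          · exact Finset.sum_congr rfl fun i hi => by rw [if_pos hi]
          · intro i _ hi; simp [hi]
        have h6 : ∑ i ∈ l.support ∪ s, (D (l i : E) + (lam i - μ) * (l i : E)
            - (if i ∈ s then g i else 0)) * b i = 0 := by
          rw [mul_zero, h4, h5, ← Finset.sum_sub_distrib] at hDp
          refine Eq.trans ?_ hDp
          exact Finset.sum_congr rfl fun i _ => by ring
        have h7 := hind _ _ (fun i => ?_) h6 i0 (Finset.mem_union_right _ hi0)
        · rw [if_pos hi0] at h7
          have h8 : D (x - l i0 / g i0) = 0 := by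
            rw [map_sub, hx, pv_div _ _ _ hgi0]
            have h9 : D (l i0 : E) = g i0 - (lam i0 - μ) * l i0 := by linear_combination h7
            have h10 : D (g i0) = - (lam i0 - μ) * g i0 := by linear_combination hz
            rw [h9, h10]; field_simp; ring
          have h11 := add_mem (hconst _ h8) (div_mem (l i0).2 (hg i0))
          simpa using h11
        · refine sub_mem (add_mem (hK _ (l i).2) (mul_mem (sub_mem (hGK _ (hlamG _)) hμK) (l i).2)) ?_
          split_ifs
          · exact hg i
          · exact zero_mem _
      · have h3 : D Q - μ * Q = ∑ i ∈ s.erase i0, (D (g i) + (lam i - μ) * g i) * b i := by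
          rw [h1, ← Finset.add_sum_erase _ _ hi0, hz, zero_mul, zero_add]
        rw [h3] at h2 hDp
        refine ih (s.erase i0) (by rw [Finset.card_erase_of_mem hi0, hs]; rfl) _ hgg h2 _ ?_ hDp
        have hQm : Q ∈ Submodule.span K (PVexp D G : Set E) := by
          rw [hQ]
          exact sum_mem fun i _ => Submodule.smul_mem _ (⟨g i, hg i⟩ : K)
            (Submodule.subset_span (hbM i))
        exact sub_mem (sub_mem (pv_span_stable D G K hK hGK p hp)
          (Submodule.smul_mem _ (⟨μ, hμK⟩ : K) hp)) hQm
  obtain ⟨l, hl⟩ := pv_expand D G K b hb q hq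
  have hq' := hl _ subset_rfl
  rw [hq'] at hq0 h
  exact key _ _ rfl (fun i => (l i : E)) (fun i => (l i).2) hq0 p hp h

theorem pv_subring_span {E : Type u} [Field E] (D : Derivation ℤ E E) (G : AddSubgroup E)
    (K0 : Subfield E) (S : Set E) (hS : S ⊆ K0) (v : E)
    (hv : v ∈ Subring.closure (S ∪ (PVexp D G : Set E))) :
    v ∈ Submodule.span K0 (PVexp D G : Set E) := by
  have h1 : Subring.closure (S ∪ (PVexp D G : Set E)) ≤
      (Algebra.adjoin K0 (PVexp D G : Set E)).toSubring := by
    rw [Subring.closure_le]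
    rintro a (ha | ha)
    · exact (Algebra.adjoin K0 (PVexp D G : Set E)).algebraMap_mem ⟨a, hS ha⟩
    · exact Algebra.subset_adjoin ha
  have h2 : v ∈ Subalgebra.toSubmodule (Algebra.adjoin K0 (PVexp D G : Set E)) := h1 hv
  rwa [Algebra.adjoin_eq_span, Submonoid.closure_eq] at h2

theorem pv_main {E : Type u} [Field E] [CharZero E] (D : Derivation ℤ E E) (G : AddSubgroup E)
    (c K : Subfield E) (hconst : ∀ x, D x = 0 → x ∈ c)
    (hG : ∀ g ∈ G, g ∈ c) (hcK : c ≤ K) (hK : ∀ x ∈ K, D x ∈ K)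
    (htop : ∀ f : E, f ∈ Subfield.closure (((c : Set E) ∪ {x | D x = 1}) ∪ (PVexp D G : Set E)))
    (f : E) (hf : f ∈ K) :
    f ∈ Subfield.closure (((c : Set E) ∪ {x | D x = 1 ∧ x ∈ K}) ∪ {e | e ∈ PVexp D G ∧ e ∈ K}) := by
  set K0 := Subfield.closure
    (((c : Set E) ∪ {x | D x = 1 ∧ x ∈ K}) ∪ {e | e ∈ PVexp D G ∧ e ∈ K}) with hK0def
  have hK0 : K0 ≤ K := by
    rw [hK0def, Subfield.closure_le]
    rintro a ((ha | ha) | ha)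
    · exact hcK ha
    · exact ha.2
    · exact ha.2
  have hsub : ((c : Set E) ∪ {x | D x = 1 ∧ x ∈ K}) ∪ {e | e ∈ PVexp D G ∧ e ∈ K} ⊆ K0 :=
    Subfield.subset_closure
  have hM : ∀ e ∈ PVexp D G, e ∈ K → e ∈ K0 := fun e h1 h2 => hsub (Or.inr ⟨h1, h2⟩)
  have hcK0 : c ≤ K0 := fun a ha => hsub (Or.inl (Or.inl ha))
  have hconstK : ∀ x, D x = 0 → x ∈ K := fun x hx => hcK (hconst x hx)
  have hGK : ∀ g ∈ G, g ∈ K := fun g hg => hcK (hG g hg)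
  by_cases hf0 : f = 0
  · rw [hf0]; exact zero_mem _
  obtain ⟨p, hp, q, hq, hpq⟩ := Subfield.mem_closure_iff.mp (htop f)
  have hq0 : q ≠ 0 := by rintro rfl; simp at hpq; exact hf0 hpq.symm
  have hpq' : p = f * q := by rw [← hpq]; field_simp
  by_cases hX : ∀ x, D x = 1 → x ∈ K
  · have hS : (c : Set E) ∪ {x | D x = 1} ⊆ K0 := by
      rintro a (ha | ha)
      · exact hcK0 ha
      · exact hsub (Or.inl (Or.inr ⟨ha, hX a ha⟩))
    exact pv_core D G K K0 hK hconstK hGK hK0 hM p q f hf (pv_subring_span D G K0 _ hS p hp)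
      (pv_subring_span D G K0 _ hS q hq) hq0 hpq'
  · push Not at hX
    obtain ⟨x, hx, hxK⟩ := hX
    set K1 := Subfield.closure ((K : Set E) ∪ (PVexp D G : Set E)) with hK1
    have hsub1 : (K : Set E) ∪ (PVexp D G : Set E) ⊆ K1 := Subfield.subset_closure
    have hKK1 : K ≤ K1 := fun a ha => hsub1 (Or.inl ha)
    have hxK1 : x ∉ K1 := by
      intro hxin
      obtain ⟨p, hp, q, hq, hpq⟩ := Subfield.mem_closure_iff.mp hxin
      have hx0 : x ≠ 0 := by rintro rfl; simp at hx
      have hq0 : q ≠ 0 := by rintro rfl; simp at hpq; exact hx0 hpq.symm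
      have hpq' : p = x * q := by rw [← hpq]; field_simp
      exact hxK (pv_x_mem D G K hK hconstK hGK p q x hx
        (pv_subring_span D G K _ subset_rfl p hp) (pv_subring_span D G K _ subset_rfl q hq) hq0 hpq')
    have hK1s : ∀ x ∈ K1, D x ∈ K1 := by
      apply pv_closure_stable
      rintro a (ha | ⟨ha0, r, hr, har⟩)
      · exact hKK1 (hK a ha)
      · rw [har]
        exact mul_mem (hKK1 (hGK r hr)) (hsub1 (Or.inr ⟨ha0, r, hr, har⟩))
    have htr := pv_transc D K1 hK1s (fun x hx => hKK1 (hconstK x hx)) x hx hxK1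
    set A0 := Subring.closure ((c : Set E) ∪ (PVexp D G : Set E)) with hA0
    have hA0K1 : A0 ≤ K1.toSubring := by
      rw [hA0, Subring.closure_le]
      rintro a (ha | ha)
      · exact hKK1 (hcK ha)
      · exact hsub1 (Or.inr ha)
    have hA0s : (c : Set E) ∪ (PVexp D G : Set E) ⊆ A0 := Subring.subset_closure
    have hrange : Subring.closure (((c : Set E) ∪ {x | D x = 1}) ∪ (PVexp D G : Set E)) ≤
        (Polynomial.aeval x : Polynomial A0 →ₐ[A0] E).range.toSubring := by
      rw [Subring.closure_le]
      rintro a ((ha | ha) | ha)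
      · exact ⟨Polynomial.C ⟨a, hA0s (Or.inl ha)⟩, by
          simp only [AlgHom.toRingHom_eq_coe, RingHom.coe_coe, Polynomial.aeval_C]; rfl⟩
      · have h1 : a - x ∈ c := hconst _ (by rw [map_sub, hx, ha, sub_self])
        exact ⟨Polynomial.X + Polynomial.C ⟨a - x, hA0s (Or.inl h1)⟩, by
          simp only [AlgHom.toRingHom_eq_coe, RingHom.coe_coe, Polynomial.aeval_C, map_add,
            Polynomial.aeval_X]
          change x + (a - x) = a
          ring⟩
      · exact ⟨Polynomial.C ⟨a, hA0s (Or.inr ha)⟩, by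
          simp only [AlgHom.toRingHom_eq_coe, RingHom.coe_coe, Polynomial.aeval_C]; rfl⟩
    obtain ⟨P, hP⟩ := hrange hp
    obtain ⟨Q, hQ⟩ := hrange hq
    let j : A0 →+* K1 := Subring.inclusion hA0K1
    have hj : ∀ R : Polynomial A0, Polynomial.aeval x (R.map j) = Polynomial.aeval x R := by
      intro R
      rw [Polynomial.aeval_def, Polynomial.eval₂_map, Polynomial.aeval_def]
      rfl
    have hzero : Polynomial.aeval x (P.map j - Polynomial.C (⟨f, hKK1 hf⟩ : K1) * Q.map j) = 0 := by
      rw [map_sub, map_mul, hj, hj, Polynomial.aeval_C]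
      have hP' : Polynomial.aeval x P = p := hP
      have hQ' : Polynomial.aeval x Q = q := hQ
      rw [hP', hQ', hpq']
      exact sub_self _
    have hzero' := (transcendental_iff.mp htr) _ hzero
    have hQ0 : Q ≠ 0 := by
      rintro rfl
      apply hq0
      rw [← hQ]; exact map_zero _
    obtain ⟨n, hn⟩ : ∃ n, Q.coeff n ≠ 0 := by
      by_contra hcon
      push Not at hcon
      exact hQ0 (Polynomial.ext (by simpa using hcon))
    have hcoef := congrArg (fun R => ((Polynomial.coeff R n : K1) : E)) hzero'
    simp only [Polynomial.coeff_sub, Polynomial.coeff_map, Polynomial.coeff_C_mul,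
      Polynomial.coeff_zero] at hcoef
    have hcoef' : ((P.coeff n : A0) : E) - f * ((Q.coeff n : A0) : E) = 0 := hcoef
    exact pv_core D G K K0 hK hconstK hGK hK0 hM (P.coeff n : E) (Q.coeff n : E) f hf
      (pv_subring_span D G K0 _ hcK0 _ (P.coeff n).2) (pv_subring_span D G K0 _ hcK0 _ (Q.coeff n).2)
      (fun h => hn (Subtype.ext h)) (sub_eq_zero.mp hcoef')

/-- the derivation as a linear map over constants -/
def pvLin {E : Type u} [Field E] (D : Derivation ℤ E E) (c : Subfield E)
    (hc : ∀ x ∈ c, D x = 0) : Module.End c E where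
  toFun := D
  map_add' := map_add D
  map_smul' := fun a x => by
    change D ((a : E) * x) = (a : E) * D x
    rw [D.leibniz, hc a a.2, smul_zero, add_zero, smul_eq_mul]

theorem pv_fact {E : Type u} [Field E] (D : Derivation ℤ E E) (c : Subfield E)
    (hc : ∀ x ∈ c, D x = 0) (x : E) (hx : D x = 1) (k : ℕ) :
    (pvLin D c hc ^ k) (x ^ k) = (k.factorial : E) := by
  induction k with
  | zero => simp
  | succ k ih =>
    rw [pow_succ, Module.End.mul_apply]
    have h1 : pvLin D c hc (x ^ (k + 1)) = (k + 1) • x ^ k := by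
      change D (x ^ (k + 1)) = _
      rw [D.leibniz_pow, hx]; simp
    rw [h1, map_nsmul, ih, Nat.factorial_succ]
    simp

theorem pv_nil {E : Type u} [Field E] [CharZero E] (D : Derivation ℤ E E) (c F : Subfield E)
    (hc : ∀ x ∈ c, D x = 0) (hconst : ∀ x, D x = 0 → x ∈ c) (hcF : c ≤ F)
    (hX : ∀ x, D x = 1 → x ∈ F) (k : ℕ) : ∀ u : E, (pvLin D c hc ^ k) u = 0 → u ∈ F := by
  induction k with
  | zero => intro u hu; simp at hu; rw [hu]; exact zero_mem _
  | succ k ih =>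
    intro u hu
    set a := (pvLin D c hc ^ k) u with ha
    have hDa : D a = 0 := by
      rw [pow_succ', Module.End.mul_apply] at hu; exact hu
    have hac := hconst a hDa
    by_cases ha0 : a = 0
    · exact ih u ha0
    rcases k with _ | k
    · simp at ha
      rw [← ha]; exact hcF hac
    · set v := (pvLin D c hc ^ k) u with hv
      have hDv : D v = a := by
        rw [ha, pow_succ', Module.End.mul_apply]; rfl
      have hx : D (v / a) = 1 := by
        rw [pv_div _ _ _ ha0, hDa, hDv]; field_simp; ring
      have hxF := hX _ hx
      have hfac : ((k + 1).factorial : E) ≠ 0 := by exact_mod_cast (Nat.factorial_pos _).ne'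
      have hm : a / ((k + 1).factorial : E) ∈ c := div_mem hac (natCast_mem c _)
      have h1 := ih (u - (⟨_, hm⟩ : c) • (v / a) ^ (k + 1)) (by
        rw [map_sub, map_smul, pv_fact D c hc _ hx, ← ha]
        change a - a / ((k + 1).factorial : E) * ((k + 1).factorial : E) = 0
        field_simp; ring)
      have h2 : (⟨_, hm⟩ : c) • (v / a) ^ (k + 1) ∈ F :=
        mul_mem (hcF hm) (pow_mem hxF _)
      simpa using add_mem h1 h2

theorem pv_eig {E : Type u} [Field E] [CharZero E] (D : Derivation ℤ E E) (G : AddSubgroup E)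
    (c F : Subfield E)
    (hc : ∀ x ∈ c, D x = 0) (hconst : ∀ x, D x = 0 → x ∈ c) (hcF : c ≤ F)
    (hX : ∀ x, D x = 1 → x ∈ F) (hM : ∀ e ∈ PVexp D G, e ∈ F) (r : c) (hr : (r : E) ∈ G) (k : ℕ)
    (y : E) (hy : ((pvLin D c hc - algebraMap c (Module.End c E) r) ^ k) y = 0) : y ∈ F := by
  classical
  by_cases hy0 : y = 0
  · rw [hy0]; exact zero_mem _
  set T := pvLin D c hc - algebraMap c (Module.End c E) r with hT
  have hTa : ∀ v, T v = D v - r * v := fun v => rfl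
  have hex : ∃ k, (T ^ k) y = 0 := ⟨k, hy⟩
  obtain ⟨m, hm⟩ : ∃ m, Nat.find hex = m + 1 := by
    refine Nat.exists_eq_succ_of_ne_zero fun h => ?_
    have := Nat.find_spec hex
    rw [h] at this
    exact hy0 (by simpa using this)
  have h1 := Nat.find_spec hex
  have h2 : (T ^ m) y ≠ 0 := Nat.find_min hex (by omega)
  rw [hm] at h1
  set e := (T ^ m) y with he
  have hTe : D e = r * e := by
    rw [pow_succ', Module.End.mul_apply, ← he, hTa] at h1
    exact sub_eq_zero.mp h1
  have heF : e ∈ F := hM e ⟨h2, r, hr, hTe⟩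
  have hit : ∀ j v, (pvLin D c hc ^ j) (v / e) = (T ^ j) v / e := by
    intro j
    induction j with
    | zero => intro v; simp
    | succ j ih =>
      intro v
      rw [pow_succ, Module.End.mul_apply, pow_succ, Module.End.mul_apply, ← ih]
      congr 1
      change D (v / e) = T v / e
      rw [pv_div _ _ _ h2, hTa, hTe]; field_simp
  have h3 : y / e ∈ F := pv_nil D c F hc hconst hcF hX (m + 1) _ (by rw [hit, h1, zero_div])
  have h4 := mul_mem h3 heF
  rwa [div_mul_cancel₀ _ h2] at h4

theorem pv_poly {E : Type u} [Field E] [CharZero E] (D : Derivation ℤ E E) (G : AddSubgroup E)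
    (c F : Subfield E) (hCalg : IsAlgClosed c)
    (hc : ∀ x ∈ c, D x = 0) (hconst : ∀ x, D x = 0 → x ∈ c) (hcF : c ≤ F)
    (hX : ∀ x, D x = 1 → x ∈ F) (hM : ∀ e ∈ PVexp D G, e ∈ F) (n : ℕ) :
    ∀ P : Polynomial c, P.natDegree = n → P ≠ 0 → (∀ r, P.IsRoot r → (r : E) ∈ G) → ∀ y : E,
      Polynomial.aeval (pvLin D c hc) P y = 0 → y ∈ F := by
  induction n using Nat.strong_induction_on with
  | _ n ih =>
    intro P hPn hP0 hroot y hy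
    by_cases hd : P.degree = 0
    · rw [Polynomial.eq_C_of_degree_eq_zero hd, Polynomial.aeval_C, Module.algebraMap_end_apply] at hy
      have ha : P.coeff 0 ≠ 0 := by
        intro h
        rw [Polynomial.eq_C_of_degree_eq_zero hd, h] at hP0
        simp at hP0
      have : y = 0 := (smul_eq_zero.mp hy).resolve_left ha
      rw [this]; exact zero_mem _
    · obtain ⟨r, hr⟩ := IsAlgClosed.exists_root P hd
      obtain ⟨Q, hPQ, hQ⟩ := Polynomial.exists_eq_pow_rootMultiplicity_mul_and_not_dvd P hP0 r
      have hk : 0 < P.rootMultiplicity r := (Polynomial.rootMultiplicity_pos hP0).mpr hr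
      set k := P.rootMultiplicity r with hkdef
      have hQ0 : Q ≠ 0 := by rintro rfl; exact hQ (dvd_zero _)
      have hcop : IsCoprime ((Polynomial.X - Polynomial.C r) ^ k) Q :=
        (((Polynomial.irreducible_X_sub_C r).coprime_iff_not_dvd).mpr hQ).pow_left
      have hyk : y ∈ LinearMap.ker (Polynomial.aeval (pvLin D c hc)
          ((Polynomial.X - Polynomial.C r) ^ k * Q)) := by
        rw [← hPQ]; exact hy
      rw [← Polynomial.sup_ker_aeval_eq_ker_aeval_mul_of_coprime _ hcop, Submodule.mem_sup] at hyk
      obtain ⟨y1, h1, y2, h2, rfl⟩ := hyk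
      have hdeg : Q.natDegree < n := by
        rw [← hPn, hPQ, Polynomial.natDegree_mul (pow_ne_zero _ (Polynomial.X_sub_C_ne_zero r)) hQ0,
          Polynomial.natDegree_pow, Polynomial.natDegree_X_sub_C]
        omega
      refine add_mem ?_ ?_
      · refine pv_eig D G c F hc hconst hcF hX hM r (hroot r hr) k y1 ?_
        have h1' := LinearMap.mem_ker.mp h1
        rwa [map_pow, map_sub, Polynomial.aeval_X, Polynomial.aeval_C] at h1'
      · refine ih _ hdeg Q rfl hQ0 (fun s hs => hroot s ?_) y2 h2
        rw [hPQ]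
        exact Polynomial.root_mul_left_of_isRoot _ hs

/-- exponents realised in a subfield -/
def pvLam {E : Type u} [Field E] (D : Derivation ℤ E E) (F : Subfield E) : AddSubgroup E where
  carrier := {r | ∃ e ∈ F, e ≠ 0 ∧ D e = r * e}
  zero_mem' := ⟨1, one_mem _, one_ne_zero, by simp⟩
  add_mem' := by
    rintro r s ⟨a, haF, ha, hra⟩ ⟨b, hbF, hb, hsb⟩
    refine ⟨a * b, mul_mem haF hbF, mul_ne_zero ha hb, ?_⟩
    rw [D.leibniz, hra, hsb]
    simp only [smul_eq_mul]
    ring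
  neg_mem' := by
    rintro r ⟨a, haF, ha, hra⟩
    refine ⟨a⁻¹, inv_mem haF, inv_ne_zero ha, ?_⟩
    rw [D.leibniz_inv, hra, smul_eq_mul]
    field_simp

theorem pv_fg {E : Type u} [Field E] (D : Derivation ℤ E E) (G : AddSubgroup E) (hG : G.FG)
    (c K : Subfield E) (hconst : ∀ x, D x = 0 → x ∈ c) :
    ∃ (m : ℕ) (y : Fin m → E), (∀ i, y i ∈ K) ∧ (∀ i, D (y i) / y i ∈ G) ∧
      ∀ F : Subfield E, c ≤ F → (∀ i, y i ∈ F) → ∀ e ∈ PVexp D G, e ∈ K → e ∈ F := by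
  have hfg : (AddSubgroup.toIntSubmodule G).FG := by
    rw [Submodule.fg_iff_addSubgroup_fg]; exact hG
  have hN : IsNoetherian ℤ (AddSubgroup.toIntSubmodule G) := isNoetherian_of_fg_of_noetherian _ hfg
  have hL : (AddSubgroup.toIntSubmodule (G ⊓ pvLam D K)).FG :=
    isNoetherian_submodule.mp hN _ (fun a ha => ha.1)
  obtain ⟨m, s, hs⟩ := Submodule.fg_iff_exists_fin_generating_family.mp hL
  have hs1 : ∀ i, s i ∈ G ⊓ pvLam D K := fun i => by
    have : s i ∈ AddSubgroup.toIntSubmodule (G ⊓ pvLam D K) := by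
      rw [← hs]; exact Submodule.subset_span ⟨i, rfl⟩
    exact this
  have hs2 : ∀ i, ∃ e ∈ K, e ≠ 0 ∧ D e = s i * e := fun i => (hs1 i).2
  choose y hyK hy0 hy using hs2
  refine ⟨m, y, hyK, fun i => ?_, ?_⟩
  · rw [hy, mul_div_cancel_right₀ _ (hy0 i)]; exact (hs1 i).1
  · intro F hcF hyF e he heK
    obtain ⟨he0, r, hr, hre⟩ := he
    have h1 : r ∈ AddSubgroup.toIntSubmodule (G ⊓ pvLam D K) := ⟨hr, e, heK, he0, hre⟩
    have h2 : AddSubgroup.toIntSubmodule (G ⊓ pvLam D K) ≤ AddSubgroup.toIntSubmodule (pvLam D F) := by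
      rw [← hs, Submodule.span_le]
      rintro _ ⟨i, rfl⟩
      exact ⟨y i, hyF i, hy0 i, hy i⟩
    obtain ⟨w, hwF, hw0, hw⟩ := h2 h1
    have h3 : D (e / w) = 0 := by
      rw [pv_div _ _ _ hw0, hre, hw, div_eq_zero_iff]; left; ring
    have h4 := mul_mem (hcF (hconst _ h3)) hwF
    rwa [div_mul_cancel₀ _ hw0] at h4

/-- Let `E` be a Picard–Vessiot extension of an algebraically closed field
of constants `C` (with zero derivation) and let `C ⊆ K ⊆ E` be an intermediate differential
field. Then `K = C(y₁,…,y_l)` where `yᵢ'/yᵢ ∈ C` for `i ≥ 2` and either `y₁' = 1` or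
`y₁'/y₁ ∈ C`. -/
theorem stmt16 {E : Type u} [Field E] [CharZero E] (D : Derivation ℤ E E)
    (c : Subfield E)
    (hc : ∀ x ∈ c, D x = 0)
    (hCalg : IsAlgClosed ↥c)
    (hPV : IsPV (⇑D) c ⊤)
    (K : Subfield E) (hcK : c ≤ K) (hKd : ∀ x ∈ K, D x ∈ K) :
    ∃ (l : ℕ) (y : Fin l → E),
      (∀ i, y i ∈ K) ∧
      Subfield.closure (↑c ∪ Set.range y) = K ∧
      (∀ i : Fin l, 1 ≤ (i : ℕ) → D (y i) / y i ∈ c) ∧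
      (∀ i : Fin l, (i : ℕ) = 0 → (D (y i) = 1 ∨ D (y i) / y i ∈ c)) := by
  obtain ⟨n, a, -, -, -, hconst', ha, y, -, hy, -, hgen⟩ := hPV
  have hconst : ∀ x, D x = 0 → x ∈ c := fun x hx => hconst' x (Subfield.mem_top x) hx
  set P : Polynomial c := Polynomial.X ^ n +
    ∑ i : Fin n, Polynomial.C ⟨a i, ha i⟩ * Polynomial.X ^ (i : ℕ) with hP
  have hP0 : P ≠ 0 := by
    have hd : (∑ i : Fin n, Polynomial.C (⟨a i, ha i⟩ : c) * Polynomial.X ^ (i : ℕ)).degree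
        < (n : WithBot ℕ) := Polynomial.degree_sum_fin_lt _
    exact (Polynomial.monic_X_pow_add hd).ne_zero
  have hPy : ∀ i, Polynomial.aeval (pvLin D c hc) P (y i) = 0 := by
    intro i
    have hpow : ∀ k v, (pvLin D c hc ^ k) v = (⇑D)^[k] v := by
      intro k v
      rw [Module.End.pow_apply]; rfl
    rw [← hy i, LApply, hP, map_add, map_pow, Polynomial.aeval_X, LinearMap.add_apply, hpow, map_sum,
      LinearMap.sum_apply]
    congr 1
    refine Finset.sum_congr rfl fun j _ => ?_
    rw [map_mul, map_pow, Polynomial.aeval_X, Polynomial.aeval_C, Module.End.mul_apply,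
      Module.algebraMap_end_apply, hpow]
    rfl
  classical
  set G : AddSubgroup E := AddSubgroup.closure ((P.roots.toFinset.image (fun r : c => (r : E)) :
    Finset E) : Set E) with hG
  have hGfg : G.FG := ⟨_, rfl⟩
  have hGc : ∀ g ∈ G, g ∈ c := by
    have : G ≤ c.toSubring.toAddSubgroup := by
      rw [hG, AddSubgroup.closure_le]
      intro r hr
      rw [Finset.mem_coe, Finset.mem_image] at hr
      obtain ⟨s, -, rfl⟩ := hr
      exact s.2
    exact fun g hg => this hg
  have hroot : ∀ r, P.IsRoot r → (r : E) ∈ G := by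
    intro r hr
    apply AddSubgroup.subset_closure
    rw [Finset.mem_coe, Finset.mem_image]
    exact ⟨r, by rw [Multiset.mem_toFinset, Polynomial.mem_roots hP0]; exact hr, rfl⟩
  set F := Subfield.closure (((c : Set E) ∪ {x | D x = 1}) ∪ (PVexp D G : Set E)) with hF
  have hsub : ((c : Set E) ∪ {x | D x = 1}) ∪ (PVexp D G : Set E) ⊆ F := Subfield.subset_closure
  have hcF : c ≤ F := fun a ha => hsub (Or.inl (Or.inl ha))
  have hFD : ∀ x ∈ F, D x ∈ F := by
    apply pv_closure_stable
    rintro a ((ha | ha) | ⟨ha0, r, hr, har⟩)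
    · rw [hc a ha]; exact zero_mem _
    · rw [show D a = 1 from ha]; exact one_mem _
    · rw [har]; exact mul_mem (hcF (hGc r hr)) (hsub (Or.inr ⟨ha0, r, hr, har⟩))
  have htop : ∀ f : E, f ∈ F := by
    intro f
    have h1 : f ∈ diffGen (⇑D) c (Set.range y) := by rw [hgen]; exact Subfield.mem_top f
    rw [diffGen, Subfield.mem_sInf] at h1
    refine h1 F ⟨hcF, ?_, hFD⟩
    rintro _ ⟨i, rfl⟩
    exact pv_poly D G c F hCalg hc hconst hcF (fun x hx => hsub (Or.inl (Or.inr hx)))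
      (fun e he => hsub (Or.inr he)) _ P rfl hP0 hroot _ (hPy i)
  have hmain := pv_main D G c K hconst hGc hcK hKd htop
  obtain ⟨m, z, hzK, hzG, hzF⟩ := pv_fg D G hGfg c K hconst
  by_cases hX : ∃ x ∈ K, D x = 1
  · obtain ⟨x, hxK, hx⟩ := hX
    have hall : ∀ i, (Fin.cons x z : Fin (m + 1) → E) i ∈ K := by
      intro i
      refine Fin.cases ?_ (fun j => ?_) i
      · exact hxK
      · exact hzK j
    refine ⟨m + 1, Fin.cons x z, hall, ?_, ?_, ?_⟩
    · apply le_antisymm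
      · rw [Subfield.closure_le]
        rintro a (ha | ⟨i, rfl⟩)
        · exact hcK ha
        · exact hall i
      · intro f hf
        refine (Subfield.closure_le.mpr ?_) (hmain f hf)
        have hs := Subfield.subset_closure
          (s := (c : Set E) ∪ Set.range (Fin.cons x z : Fin (m + 1) → E))
        have hcs : c ≤ Subfield.closure ((c : Set E) ∪ Set.range (Fin.cons x z : Fin (m + 1) → E)) :=
          fun a ha => hs (Or.inl ha)
        rintro b ((hb | hb) | hb)
        · exact hcs hb
        · have h1 : b - x ∈ c := hconst _ (by rw [map_sub, hx, hb.1, sub_self])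
          have h2 := add_mem (hcs h1) (hs (Or.inr ⟨0, rfl⟩))
          simpa using h2
        · exact hzF _ hcs (fun i => hs (Or.inr ⟨i.succ, rfl⟩)) b hb.1 hb.2
    · intro i
      refine Fin.cases ?_ (fun j => ?_) i
      · intro h; simp at h
      · intro _; exact hGc _ (hzG j)
    · intro i
      refine Fin.cases ?_ (fun j => ?_) i
      · intro _; exact Or.inl hx
      · intro h; simp at h
  · refine ⟨m, z, hzK, ?_, fun i _ => hGc _ (hzG i), fun i _ => Or.inr (hGc _ (hzG i))⟩
    apply le_antisymm
    · rw [Subfield.closure_le]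
      rintro a (ha | ⟨i, rfl⟩)
      · exact hcK ha
      · exact hzK i
    · intro f hf
      refine (Subfield.closure_le.mpr ?_) (hmain f hf)
      have hs := Subfield.subset_closure (s := (c : Set E) ∪ Set.range z)
      have hcs : c ≤ Subfield.closure ((c : Set E) ∪ Set.range z) := fun a ha => hs (Or.inl ha)
      rintro b ((hb | hb) | hb)
      · exact hcs hb
      · exact absurd ⟨b, hb.2, hb.1⟩ hX
      · exact hzF _ hcs (fun i => hs (Or.inr ⟨i, rfl⟩)) b hb.1 hb.2
end

section
/- Let C be an algebraically closed field of characteristic zero and let n ≥ 3 be an integer. Equip the rational function field C(t) with the unique derivation D satisfying D(c) = 0 for all c ∈ C and D(t) = 1. Then there is no u ∈ C(t) with D(u) = 1/(tⁿ − 1), and there are no u ∈ C(t) with u ≠ 0 and nonzero c ∈ C such that D(u)/(c·u) = 1/(tⁿ − 1). -/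
universe u

section helpers
open Polynomial

lemma aux_factor {K : Type*} [Field K] (p : K[X]) (hp : p ≠ 0) (z : K) :
    ∃ (a : ℕ) (p1 : K[X]), p1.eval z ≠ 0 ∧ p = (X - C z) ^ a * p1 ∧
      (X - C z) * derivative p = (X - C z) ^ a * ((a : K[X]) * p1 + (X - C z) * derivative p1) := by
  obtain ⟨q, h1, h2⟩ := p.exists_eq_pow_rootMultiplicity_mul_and_not_dvd hp z
  refine ⟨p.rootMultiplicity z, q, ?_, h1, ?_⟩
  · rwa [dvd_iff_isRoot] at h2
  · generalize p.rootMultiplicity z = a at h1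
    subst h1
    rcases a with _ | a
    · simp
    · simp only [derivative_mul, derivative_X_sub_C_pow, Nat.add_sub_cancel, map_natCast]
      ring

lemma aux_root {K : Type*} [Field K] (n : ℕ) (z : K) (hz : z ^ n = 1) :
    ∃ g : K[X], X ^ n - 1 = (X - C z) * g ∧ g.eval z = n * z ^ (n - 1) := by
  have h : (X - C z) ∣ (X ^ n - 1 : K[X]) := by
    rw [dvd_iff_isRoot]; simp [hz]
  obtain ⟨g, hg⟩ := h
  refine ⟨g, hg, ?_⟩
  have := congrArg (fun f => (derivative f).eval z) hg
  simpa [derivative_X_pow] using this.symm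

lemma aux_log {K : Type*} [Field K] (p q : K[X]) (hp : p ≠ 0) (hq : q ≠ 0) (n : ℕ) (c z : K)
    (hz : z ^ n = 1)
    (h : (derivative p * q - p * derivative q) * (X ^ n - 1) = C c * p * q) :
    ∃ m : ℤ, (m : K) * (n * z ^ (n - 1)) = c := by
  obtain ⟨g, hg, hgz⟩ := aux_root n z hz
  obtain ⟨a, p1, hp1, hpa, hpd⟩ := aux_factor p hp z
  obtain ⟨b, q1, hq1, hqb, hqd⟩ := aux_factor q hq z
  refine ⟨a - b, ?_⟩
  have hX : (X - C z) ^ (a + b) ≠ 0 := pow_ne_zero _ (X_sub_C_ne_zero z)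
  have key : (((a : K[X]) * p1 + (X - C z) * derivative p1) * q1
      - p1 * ((b : K[X]) * q1 + (X - C z) * derivative q1)) * g = C c * p1 * q1 := by
    apply mul_left_cancel₀ hX
    have e : ((X - C z) * derivative p * q - p * ((X - C z) * derivative q)) * g
        = C c * p * q := by rw [← h, hg]; ring
    rw [hpd, hqd] at e
    nth_rewrite 1 [hqb] at e
    nth_rewrite 1 [hpa] at e
    rw [hpa, hqb] at e
    linear_combination e
  have := congrArg (eval z) key
  simp [hgz] at this
  have h3 : p1.eval z * q1.eval z ≠ 0 := mul_ne_zero hp1 hq1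
  apply mul_right_cancel₀ h3
  push_cast
  linear_combination this

lemma aux_int {K : Type*} [Field K] [CharZero K] (p q : K[X]) (hp : p ≠ 0) (hq : q ≠ 0) (n : ℕ)
    (hn : n ≠ 0)
    (h : (derivative p * q - p * derivative q) * (X ^ n - 1) = q * q) : False := by
  obtain ⟨g, hg, hgz⟩ := aux_root n (1 : K) (one_pow n)
  obtain ⟨a, p1, hp1, hpa, hpd⟩ := aux_factor p hp 1
  obtain ⟨b, q1, hq1, hqb, hqd⟩ := aux_factor q hq 1
  have hX (k : ℕ) : (X - C (1 : K)) ^ k ≠ 0 := pow_ne_zero _ (X_sub_C_ne_zero 1)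
  have key : (X - C 1) ^ a * ((((a : K[X]) * p1 + (X - C 1) * derivative p1) * q1
      - p1 * ((b : K[X]) * q1 + (X - C 1) * derivative q1)) * g)
      = (X - C 1) ^ b * (q1 * q1) := by
    apply mul_left_cancel₀ (hX b)
    have e : ((X - C 1) * derivative p * q - p * ((X - C 1) * derivative q)) * g
        = q * q := by rw [← h, hg]; ring
    rw [hpd, hqd] at e
    rw [hpa, hqb] at e
    linear_combination e
  have hn' : (n : K) ≠ 0 := by exact_mod_cast hn
  rcases lt_trichotomy a b with hab | hab | hab
  · obtain ⟨d, rfl⟩ := Nat.exists_eq_add_of_lt hab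
    have k2 : _ = (X - C 1) ^ (d + 1) * (q1 * q1) :=
      mul_left_cancel₀ (hX a) (key.trans (by ring))
    have := congrArg (eval 1) k2
    simp [hgz, hn'] at this
    have h3 : p1.eval 1 * q1.eval 1 * ((d : K) + 1) = 0 := by linear_combination -this
    have h4 : (d : K) + 1 ≠ 0 := by exact_mod_cast Nat.succ_ne_zero d
    simp [hp1, hq1, h4] at h3
  · subst hab
    have k2 := congrArg (eval 1) (mul_left_cancel₀ (hX a) key)
    simp [hgz, hn'] at k2
    have h3 : q1.eval 1 * q1.eval 1 = 0 := by linear_combination -k2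
    simp [hq1] at h3
  · obtain ⟨d, rfl⟩ := Nat.exists_eq_add_of_lt hab
    rw [add_assoc, pow_add, mul_assoc] at key
    have k2 := mul_left_cancel₀ (hX b) key
    have := congrArg (eval 1) k2
    simp [hq1] at this

lemma aux_rat {K : Type*} [Field K] [CharZero K] (n : ℕ) (hn : 3 ≤ n) (z c : K) (hc : c ≠ 0)
    (hz : IsPrimitiveRoot z n)
    (h : ∀ w : K, w ^ n = 1 → ∃ m : ℤ, (m : K) * (n * w ^ (n - 1)) = c) : False := by
  obtain ⟨m, hm⟩ := h 1 (one_pow n)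
  obtain ⟨k, hk⟩ := h z hz.pow_eq_one
  have hn' : (n : K) ≠ 0 := by exact_mod_cast (by omega : n ≠ 0)
  have hzz : z ^ (n - 1) * z = 1 := by
    rw [← pow_succ, Nat.sub_add_cancel (by omega), hz.pow_eq_one]
  have e : (k : K) = m * z := by
    apply mul_right_cancel₀ hn'
    rw [one_pow] at hm
    linear_combination z * hk - z * hm - (k : K) * n * hzz
  have hm0 : (m : K) ≠ 0 := by
    rintro h0; rw [h0] at hm; simp at hm; exact hc hm.symm
  have e2 : k ^ n = m ^ n := by
    have : (k : K) ^ n = m ^ n := by rw [e, mul_pow, hz.pow_eq_one, mul_one]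
    exact_mod_cast this
  have e3 : |k| = |m| := by
    have := congrArg abs e2
    rw [abs_pow, abs_pow] at this
    exact (pow_left_inj₀ (abs_nonneg _) (abs_nonneg _) (by omega)).1 this
  have e4 : (k : K) ^ 2 = m ^ 2 := by
    have := sq_eq_sq_iff_abs_eq_abs k m |>.2 e3
    exact_mod_cast this
  have e5 : z ^ 2 = 1 := by
    apply mul_left_cancel₀ (pow_ne_zero 2 hm0)
    rw [← mul_pow, ← e, e4, mul_one]
  have := Nat.le_of_dvd (by norm_num) (hz.dvd_of_pow_eq_one 2 e5)
  omega

lemma aux_deriv {F : Type*} [Field F] (D : Derivation ℤ F F)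
    (K : Subfield F) (t : F) (hconst : ∀ c ∈ K, D c = 0) (ht : D t = 1) (p : K[X]) :
    D (aeval t p) = aeval t (derivative p) := by
  induction p using Polynomial.induction_on' with
  | add p q hp hq => simp [hp, hq]
  | monomial k a =>
    rw [aeval_monomial, derivative_monomial, aeval_monomial, Derivation.leibniz,
      Derivation.leibniz_pow, ht]
    have : D (algebraMap K F a) = 0 := hconst _ a.2
    rw [this]
    simp
    ring

end helpers

/-- Let `C(t)` be the rational function field over an algebraically closed
field `C` of characteristic zero, with the derivation `D` vanishing on `C` and `D t = 1`,
and let `n ≥ 3`. Then there is no `u ∈ C(t)` with `D u = 1/(tⁿ − 1)`, and there are no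
nonzero `u ∈ C(t)` and nonzero `c ∈ C` with `D u / (c·u) = 1/(tⁿ − 1)`. -/
theorem stmt17 {F : Type u} [Field F] [CharZero F] (D : Derivation ℤ F F)
    (C : Subfield F) (hCalg : IsAlgClosed ↥C)
    (t : F) (htr : Transcendental ↥C t)
    (hgen : Subfield.closure (↑C ∪ {t}) = (⊤ : Subfield F))
    (hCconst : ∀ c ∈ C, D c = 0) (ht : D t = 1)
    (n : ℕ) (hn : 3 ≤ n) :
    (¬ ∃ u : F, D u = 1 / (t ^ n - 1)) ∧
    (¬ ∃ (u c : F), u ≠ 0 ∧ c ∈ C ∧ c ≠ 0 ∧ D u / (c * u) = 1 / (t ^ n - 1)) := by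
  classical
  have hrep : ∀ u : F, ∃ p q : Polynomial C, q ≠ 0 ∧
      u = Polynomial.aeval t p / Polynomial.aeval t q := by
    intro u
    have hu : u ∈ IntermediateField.adjoin C {t} := by
      rw [← IntermediateField.mem_toSubfield, IntermediateField.adjoin_toSubfield]
      have : Set.range (algebraMap C F) = (C : Set F) := Subtype.range_coe
      rw [this, hgen]; trivial
    obtain ⟨p, q, h⟩ := (IntermediateField.mem_adjoin_simple_iff C u).1 hu
    by_cases hq : q = 0
    · exact ⟨0, 1, one_ne_zero, by simp [h, hq]⟩
    · exact ⟨p, q, hq, h⟩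
  have hinj : Function.Injective (Polynomial.aeval (R := C) t) :=
    transcendental_iff_injective.1 htr
  have hne : ∀ p : Polynomial C, p ≠ 0 → Polynomial.aeval t p ≠ 0 := fun p hp h0 =>
    hp (hinj (by rw [h0, map_zero]))
  have hT : t ^ n - 1 ≠ 0 := by
    have := hne (Polynomial.X ^ n - 1) (Polynomial.X_pow_sub_C_ne_zero (by omega) 1)
    simpa using this
  have hder : ∀ (p q : Polynomial C), q ≠ 0 →
      D (Polynomial.aeval t p / Polynomial.aeval t q) * (Polynomial.aeval t q) ^ 2 =
      Polynomial.aeval t (Polynomial.derivative p * q - p * Polynomial.derivative q) := by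
    intro p q hq
    have h1 := hne q hq
    have h2 := D.leibniz (Polynomial.aeval t p / Polynomial.aeval t q) (Polynomial.aeval t q)
    rw [div_mul_cancel₀ _ h1, aux_deriv D C t hCconst ht, aux_deriv D C t hCconst ht] at h2
    simp only [smul_eq_mul] at h2
    rw [map_sub, map_mul, map_mul, h2]
    field_simp
    ring
  constructor
  · rintro ⟨u, hu⟩
    obtain ⟨p, q, hq, rfl⟩ := hrep u
    have hp : p ≠ 0 := by
      rintro rfl
      simp at hu
      exact hT hu.symm
    refine aux_int p q hp hq n (by omega) (hinj ?_)
    rw [map_mul, ← hder p q hq, hu]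
    simp only [map_sub, map_pow, Polynomial.aeval_X, map_one, map_mul]
    field_simp
  · rintro ⟨u, c, hu0, hc, hc0, hu⟩
    obtain ⟨p, q, hq, rfl⟩ := hrep u
    have hp : p ≠ 0 := by
      rintro rfl
      simp at hu0
    have hp' := hne p hp
    have hq' := hne q hq
    have hu' : D (Polynomial.aeval t p / Polynomial.aeval t q) =
        c * (Polynomial.aeval t p / Polynomial.aeval t q) / (t ^ n - 1) := by
      rw [div_eq_iff (mul_ne_zero hc0 hu0)] at hu
      rw [hu]; ring
    haveI : NeZero ((n : ℕ) : C) := ⟨by exact_mod_cast (by omega : n ≠ 0)⟩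
    obtain ⟨z, hz⟩ := HasEnoughRootsOfUnity.exists_primitiveRoot C n
    refine aux_rat n hn z (⟨c, hc⟩ : C) (fun h => hc0 (congrArg Subtype.val h)) hz ?_
    intro w hw
    refine aux_log p q hp hq n _ w hw (hinj ?_)
    rw [map_mul, ← hder p q hq, hu']
    have : algebraMap C F ⟨c, hc⟩ = c := rfl
    simp only [map_sub, map_pow, Polynomial.aeval_X, map_one, map_mul, Polynomial.aeval_C, this]
    field_simp
end
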